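/- arXiv:2506.12171 — 17 statements merged into one kernel-verified Lean document; each statement's English description precedes it below -/
import Mathlib

section
/- For s ∈ ℝ^d, the set {⟨s, α⟩ − F(α) : α ∈ ℝ^d} is bounded above if and only if s belongs to the Newton polytope N; moreover the surface tension σ (which is thus real-valued on N) is strictly convex on the entire closed polytope N. -/
/-- The free energy `F(α) = log(Σ_{j=1}^D exp(⟨e_j, α⟩))` of the multinomial dimer model. -/
noncomputable def freeEnergy (d D : ℕ) (e : Fin D → (Fin d → ℝ)) (α : Fin d → ℝ) : ℝ :=
  Real.log (∑ j, Real.exp (∑ i, e j i * α i))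

/-- The surface tension `σ(s) = sup_{α ∈ ℝ^d} (⟨s, α⟩ − F(α))`, the Legendre dual of `F`. -/
noncomputable def surfTension (d D : ℕ) (e : Fin D → (Fin d → ℝ)) (s : Fin d → ℝ) : ℝ :=
  sSup (Set.range fun α : Fin d → ℝ => (∑ i, s i * α i) - freeEnergy d D e α)

open Finset in
theorem aux_hull (d D : ℕ) (e : Fin D → (Fin d → ℝ)) (s : Fin d → ℝ) :
    s ∈ convexHull ℝ (Set.range e) ↔ ∃ p ∈ stdSimplex ℝ (Fin D), ∑ j, p j • e j = s := by
  constructor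
  · intro hs
    have hconv : Convex ℝ {s : Fin d → ℝ | ∃ p ∈ stdSimplex ℝ (Fin D), ∑ j, p j • e j = s} := by
      rintro x ⟨p, hp, rfl⟩ y ⟨q, hq, rfl⟩ a b ha hb hab
      refine ⟨a • p + b • q, convex_stdSimplex ℝ _ hp hq ha hb hab, ?_⟩
      simp [add_smul, Finset.sum_add_distrib, Finset.smul_sum, mul_smul]
    refine convexHull_min ?_ hconv hs
    rintro _ ⟨j, rfl⟩
    exact ⟨Pi.single j 1, single_mem_stdSimplex ℝ j, by simp [Pi.single_apply]⟩
  · rintro ⟨p, hp, rfl⟩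
    exact mem_convexHull_of_exists_fintype p e hp.1 hp.2 (fun i => ⟨i, rfl⟩) rfl

theorem aux_pair (d D : ℕ) (e : Fin D → (Fin d → ℝ)) (p : Fin D → ℝ) (α : Fin d → ℝ) :
    ∑ i, (∑ j, p j • e j) i * α i = ∑ j, p j * ∑ i, e j i * α i := by
  simp only [Finset.sum_apply, Pi.smul_apply, smul_eq_mul, Finset.sum_mul, Finset.mul_sum]
  rw [Finset.sum_comm]
  simp only [mul_assoc]

theorem aux_Z (D : ℕ) (hD : 1 ≤ D) (x : Fin D → ℝ) : 0 < ∑ j, Real.exp (x j) := by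
  have : Nonempty (Fin D) := ⟨⟨0, hD⟩⟩
  exact Finset.sum_pos (fun j _ => Real.exp_pos _) Finset.univ_nonempty

theorem aux_weak (D : ℕ) (hD : 1 ≤ D) (x p : Fin D → ℝ) (hp : p ∈ stdSimplex ℝ (Fin D)) :
    ∑ j, p j * x j - Real.log (∑ j, Real.exp (x j)) ≤ ∑ j, p j * Real.log (p j) := by
  have hZ := aux_Z D hD x
  set Z := ∑ j, Real.exp (x j) with hZd
  have key : ∀ j, p j * x j - p j * Real.log Z - p j * Real.log (p j) ≤
      Real.exp (x j) / Z - p j := by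
    intro j
    rcases (hp.1 j).eq_or_lt with h | h
    · rw [← h]
      have := div_pos (Real.exp_pos (x j)) hZ
      simp only [zero_mul, sub_zero]
      exact this.le
    · have h1 := Real.log_le_sub_one_of_pos (x := Real.exp (x j) / (Z * p j)) (by positivity)
      rw [Real.log_div (by positivity) (by positivity), Real.log_exp,
        Real.log_mul (by positivity) (by positivity)] at h1
      have h2 := mul_le_mul_of_nonneg_left h1 h.le
      have h3 : p j * (Real.exp (x j) / (Z * p j) - 1) = Real.exp (x j) / Z - p j := by
        field_simp
      rw [h3] at h2
      linarith
  have h := Finset.sum_le_sum (fun j (_ : j ∈ Finset.univ) => key j)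
  simp only [Finset.sum_sub_distrib, ← Finset.sum_mul, ← Finset.sum_div] at h
  rw [hp.2, ← hZd, div_self hZ.ne'] at h
  linarith

theorem aux_gibbs (D : ℕ) (hD : 1 ≤ D) (x : Fin D → ℝ) :
    ∃ p ∈ stdSimplex ℝ (Fin D),
    ∑ j, p j * x j - Real.log (∑ j, Real.exp (x j)) = ∑ j, p j * Real.log (p j) := by
  have hZ := aux_Z D hD x
  set Z := ∑ j, Real.exp (x j) with hZd
  have h1 : ∑ j, Real.exp (x j) / Z = 1 := by
    rw [← Finset.sum_div, ← hZd, div_self hZ.ne']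
  refine ⟨fun j => Real.exp (x j) / Z, ⟨fun j => by positivity, h1⟩, ?_⟩
  have : ∀ j, Real.log (Real.exp (x j) / Z) = x j - Real.log Z := by
    intro j
    rw [Real.log_div (by positivity) (by positivity), Real.log_exp]
  simp only [this, mul_sub, Finset.sum_sub_distrib, ← Finset.sum_mul, h1, one_mul]

theorem aux_clm (d : ℕ) (f : (Fin d → ℝ) →ₗ[ℝ] ℝ) :
    ∃ α : Fin d → ℝ, ∀ x, f x = ∑ i, x i * α i :=
  ⟨fun i => f (Pi.single i 1), fun x => by
    rw [LinearMap.pi_apply_eq_sum_univ f x]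
    refine Finset.sum_congr rfl fun i _ => ?_
    rw [smul_eq_mul]
    congr 2
    ext j
    simp [Pi.single_apply, eq_comm]⟩

theorem aux_le (d D : ℕ) (hD : 1 ≤ D) (e : Fin D → (Fin d → ℝ)) (p : Fin D → ℝ)
    (hp : p ∈ stdSimplex ℝ (Fin D)) (α : Fin d → ℝ) :
    (∑ i, (∑ j, p j • e j) i * α i) - freeEnergy d D e α ≤ ∑ j, p j * Real.log (p j) := by
  rw [aux_pair]
  exact aux_weak D hD _ p hp

theorem aux_H (D : ℕ) : StrictConvexOn ℝ (stdSimplex ℝ (Fin D))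
    (fun p : Fin D → ℝ => ∑ j, p j * Real.log (p j)) := by
  refine ⟨convex_stdSimplex ℝ _, ?_⟩
  intro p hp q hq hpq a b ha hb hab
  simp only [smul_eq_mul, Finset.mul_sum, ← Finset.sum_add_distrib]
  obtain ⟨k, hk⟩ := Function.ne_iff.1 hpq
  refine Finset.sum_lt_sum (fun j _ => ?_) ⟨k, Finset.mem_univ _, ?_⟩
  · exact Real.strictConvexOn_mul_log.convexOn.2 (hp.1 j) (hq.1 j) ha.le hb.le hab
  · exact Real.strictConvexOn_mul_log.2 (hp.1 k) (hq.1 k) hk ha hb hab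

theorem aux_strong (d D : ℕ) (hD : 1 ≤ D) (e : Fin D → (Fin d → ℝ)) (s : Fin d → ℝ)
    (hs : s ∈ convexHull ℝ (Set.range e)) (σ : ℝ)
    (hσ : ∀ α : Fin d → ℝ, (∑ i, s i * α i) - freeEnergy d D e α ≤ σ) :
    ∃ p ∈ stdSimplex ℝ (Fin D), ∑ j, p j • e j = s ∧ ∑ j, p j * Real.log (p j) ≤ σ := by
  by_contra hcon
  let C : Set ((Fin d → ℝ) × ℝ) := {z | ∃ p ∈ stdSimplex ℝ (Fin D), ∑ j, p j • e j = z.1 ∧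
    ∑ j, p j * Real.log (p j) ≤ z.2}
  have hconv : Convex ℝ C := by
    rintro ⟨x, t⟩ ⟨p, hp, hpx, hpt⟩ ⟨y, u⟩ ⟨q, hq, hqy, hqu⟩ a b ha hb hab
    refine ⟨a • p + b • q, convex_stdSimplex ℝ _ hp hq ha hb hab, ?_, ?_⟩
    · simp only at hpx hqy
      subst hpx hqy
      simp [add_smul, Finset.sum_add_distrib, Finset.smul_sum, mul_smul]
    · refine ((aux_H D).convexOn.2 hp hq ha hb hab).trans ?_
      exact add_le_add (mul_le_mul_of_nonneg_left hpt ha) (mul_le_mul_of_nonneg_left hqu hb)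
  have hclosed : IsClosed C := by
    have hT : IsClosed {w : stdSimplex ℝ (Fin D) × ((Fin d → ℝ) × ℝ) |
        ∑ j, w.1.1 j • e j = w.2.1 ∧ ∑ j, w.1.1 j * Real.log (w.1.1 j) ≤ w.2.2} := by
      have hc : ∀ j, Continuous (fun w : stdSimplex ℝ (Fin D) × ((Fin d → ℝ) × ℝ) => w.1.1 j) :=
        fun j => (continuous_apply j).comp (continuous_subtype_val.comp continuous_fst)
      refine IsClosed.inter (isClosed_eq ?_ (continuous_fst.comp continuous_snd))
        (isClosed_le ?_ (continuous_snd.comp continuous_snd))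
      · exact continuous_finsetSum _ fun j _ => (hc j).smul continuous_const
      · exact continuous_finsetSum _ fun j _ => Real.continuous_mul_log.comp (hc j)
    have := isClosedMap_snd_of_compactSpace _ hT
    convert this using 1
    ext z
    constructor
    · rintro ⟨p, hp, h⟩
      exact ⟨(⟨p, hp⟩, z), h, rfl⟩
    · rintro ⟨⟨⟨p, hp⟩, z'⟩, h, rfl⟩
      exact ⟨p, hp, h⟩
  have hnot : ((s, σ) : (Fin d → ℝ) × ℝ) ∉ C := hcon
  obtain ⟨f, u, hfC, hfs⟩ := geometric_hahn_banach_closed_point hconv hclosed hnot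
  obtain ⟨α, hα⟩ := aux_clm d (f.toLinearMap ∘ₗ LinearMap.inl ℝ (Fin d → ℝ) ℝ)
  set b := f (0, 1) with hb
  have hf : ∀ x t, f (x, t) = ∑ i, x i * α i + t * b := by
    intro x t
    have h1 := hα x
    simp only [LinearMap.comp_apply, LinearMap.inl_apply, ContinuousLinearMap.coe_coe] at h1
    have : ((x, t) : (Fin d → ℝ) × ℝ) = (x, 0) + t • (0, 1) := by simp
    rw [this, map_add, map_smul, h1, hb, smul_eq_mul]
  obtain ⟨p, hp, hps⟩ := (aux_hull d D e s).1 hs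
  have hbneg : b < 0 := by
    have h1 := hfC (s, max (∑ j, p j * Real.log (p j)) (σ + 1)) ⟨p, hp, hps, le_max_left _ _⟩
    have h2 := h1.trans hfs
    rw [hf, hf] at h2
    have h3 := le_max_right (∑ j, p j * Real.log (p j)) (σ + 1)
    by_contra hb0
    push Not at hb0
    nlinarith
  obtain ⟨q, hq, hqe⟩ := aux_gibbs D hD (fun j => ∑ i, e j i * (α i / (-b)))
  have h1 := (hfC (∑ j, q j • e j, ∑ j, q j * Real.log (q j)) ⟨q, hq, rfl, le_rfl⟩).trans hfs
  rw [hf, hf] at h1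
  have h2 := hσ (fun i => α i / (-b))
  have h3 := aux_pair d D e q (fun i => α i / (-b))
  have hsc : ∀ x : Fin d → ℝ, ∑ i, x i * (α i / (-b)) = (∑ i, x i * α i) / (-b) := by
    intro x
    rw [Finset.sum_div]
    simp only [mul_div_assoc]
  unfold freeEnergy at h2
  rw [← h3] at hqe
  have h4 := hsc s
  have h5 := hsc (∑ j, q j • e j)
  rw [eq_div_iff (by linarith)] at h4 h5
  rw [← h4, ← h5] at h1
  nlinarith

theorem aux_bdd (d D : ℕ) (hD : 1 ≤ D) (e : Fin D → (Fin d → ℝ)) (s : Fin d → ℝ)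
    (hb : BddAbove (Set.range fun α : Fin d → ℝ => (∑ i, s i * α i) - freeEnergy d D e α)) :
    s ∈ convexHull ℝ (Set.range e) := by
  by_contra hs
  obtain ⟨f, u, hfC, hfs⟩ := geometric_hahn_banach_closed_point (convex_convexHull ℝ (Set.range e))
    ((Set.finite_range e).isClosed_convexHull ℝ) hs
  obtain ⟨α, hα⟩ := aux_clm d f.toLinearMap
  simp only [ContinuousLinearMap.coe_coe] at hα
  obtain ⟨B, hB⟩ := hb
  have hpos : 0 < f s - u := by linarith
  obtain ⟨n, hn⟩ := exists_nat_gt ((B + Real.log D) / (f s - u))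
  rw [div_lt_iff₀ hpos] at hn
  have h1 : (∑ i, s i * (n * α i)) - freeEnergy d D e (fun i => n * α i) ≤ B := hB ⟨_, rfl⟩
  have hsc : ∀ x : Fin d → ℝ, ∑ i, x i * (n * α i) = n * f x := by
    intro x
    rw [hα, Finset.mul_sum]
    exact Finset.sum_congr rfl fun i _ => by ring
  have hDpos : (0 : ℝ) < D := by exact_mod_cast hD
  have h2 : freeEnergy d D e (fun i => n * α i) ≤ Real.log D + n * u := by
    unfold freeEnergy
    simp only [hsc]
    rw [← Real.log_exp (n * u), ← Real.log_mul hDpos.ne' (Real.exp_pos _).ne']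
    refine Real.log_le_log (aux_Z D hD _) ?_
    calc ∑ j, Real.exp (n * f (e j)) ≤ ∑ j : Fin D, Real.exp (n * u) := by
          refine Finset.sum_le_sum fun j _ => Real.exp_le_exp.2 ?_
          exact mul_le_mul_of_nonneg_left (hfC _ (subset_convexHull ℝ _ ⟨j, rfl⟩)).le
            (Nat.cast_nonneg n)
      _ = D * Real.exp (n * u) := by simp
  rw [hsc] at h1
  nlinarith

/-- The set `{⟨s, α⟩ − F(α) : α ∈ ℝ^d}` is bounded above iff `s` belongs to the Newton
polytope `N = convexHull {e_1, …, e_D}`; moreover the surface tension `σ` is strictly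
convex on the entire closed polytope `N`. -/
theorem surfTension_bddAbove_iff_and_strictConvexOn
    (d D : ℕ) (hd : 1 ≤ d) (hD : 1 ≤ D)
    (e : Fin D → (Fin d → ℝ))
    (hspan : Submodule.span ℝ (Set.range e) = ⊤)
    (hsum : ∑ j, e j = 0) :
    (∀ s : Fin d → ℝ,
      BddAbove (Set.range fun α : Fin d → ℝ => (∑ i, s i * α i) - freeEnergy d D e α) ↔
        s ∈ convexHull ℝ (Set.range e)) ∧
    StrictConvexOn ℝ (convexHull ℝ (Set.range e)) (surfTension d D e) := by
  have hbdd : ∀ s : Fin d → ℝ,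
      BddAbove (Set.range fun α : Fin d → ℝ => (∑ i, s i * α i) - freeEnergy d D e α) ↔
        s ∈ convexHull ℝ (Set.range e) := by
    intro s
    refine ⟨aux_bdd d D hD e s, fun hs => ?_⟩
    obtain ⟨p, hp, rfl⟩ := (aux_hull d D e s).1 hs
    refine ⟨∑ j, p j * Real.log (p j), ?_⟩
    rintro _ ⟨α, rfl⟩
    exact aux_le d D hD e p hp α
  refine ⟨hbdd, convex_convexHull ℝ _, ?_⟩
  intro x hx y hy hxy a b ha hb hab
  obtain ⟨p, hp, hpx, hpH⟩ := aux_strong d D hD e x hx (surfTension d D e x)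
    (fun α => le_csSup ((hbdd x).2 hx) ⟨α, rfl⟩)
  obtain ⟨q, hq, hqy, hqH⟩ := aux_strong d D hD e y hy (surfTension d D e y)
    (fun α => le_csSup ((hbdd y).2 hy) ⟨α, rfl⟩)
  have hpq : p ≠ q := by
    rintro rfl
    exact hxy (hpx.symm.trans hqy)
  have h1 := (aux_H D).2 hp hq hpq ha hb hab
  have hr := convex_stdSimplex ℝ (Fin D) hp hq ha.le hb.le hab
  have hxy' : ∑ j, (a • p + b • q) j • e j = a • x + b • y := by
    rw [← hpx, ← hqy]
    simp [add_smul, Finset.sum_add_distrib, Finset.smul_sum, mul_smul]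
  have h2 : surfTension d D e (a • x + b • y) ≤
      ∑ j, (a • p + b • q) j * Real.log ((a • p + b • q) j) := by
    refine csSup_le (Set.range_nonempty _) ?_
    rintro _ ⟨α, rfl⟩
    rw [← hxy']
    exact aux_le d D hD e _ hr α
  refine h2.trans_lt (h1.trans_le ?_)
  exact add_le_add (mul_le_mul_of_nonneg_left hpH ha.le) (mul_le_mul_of_nonneg_left hqH hb.le)
end

section
/- The gradient map ∇F : ℝ^d → ℝ^d, given explicitly by ∇F(α) = (Σ_{j=1}^D exp(⟨e_j, α⟩) e_j) / (Σ_{k=1}^D exp(⟨e_k, α⟩)), is injective and its range is exactly the interior of the Newton polytope N; that is, ∇F is a bijection from ℝ^d onto the interior of N. -/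
/-- The gradient of the free energy,
`∇F(α) = (Σ_j exp(⟨e_j, α⟩) e_j) / (Σ_k exp(⟨e_k, α⟩))`. -/
noncomputable def gradFreeEnergy (d D : ℕ) (e : Fin D → (Fin d → ℝ)) (α : Fin d → ℝ) :
    Fin d → ℝ :=
  (∑ k, Real.exp (∑ i, e k i * α i))⁻¹ • ∑ j, Real.exp (∑ i, e j i * α i) • e j

namespace GradAux

variable {d D : ℕ}

lemma Z_pos (hD : 1 ≤ D) (a : Fin D → ℝ) : 0 < ∑ k, Real.exp (a k) := by
  have : Nonempty (Fin D) := ⟨⟨0, hD⟩⟩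
  exact Finset.sum_pos (fun _ _ => Real.exp_pos _) Finset.univ_nonempty

lemma grad_pair (e : Fin D → (Fin d → ℝ)) (α v : Fin d → ℝ) :
    ∑ i, gradFreeEnergy d D e α i * v i =
      ∑ j, (∑ k, Real.exp (∑ i, e k i * α i))⁻¹ * Real.exp (∑ i, e j i * α i) *
        (∑ i, e j i * v i) := by
  unfold gradFreeEnergy
  simp only [Pi.smul_apply, Finset.sum_apply, smul_eq_mul, Finset.mul_sum, Finset.sum_mul]
  rw [Finset.sum_comm]
  refine Finset.sum_congr rfl fun j _ => Finset.sum_congr rfl fun i _ => ?_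
  ring

lemma eq_zero_of_const (hD : 1 ≤ D) (e : Fin D → (Fin d → ℝ))
    (hspan : Submodule.span ℝ (Set.range e) = ⊤) (hsum : ∑ j, e j = 0)
    (v : Fin d → ℝ) (c : ℝ) (h : ∀ j, ∑ i, e j i * v i = c) : v = 0 := by
  have h1 : (D : ℝ) * c = 0 := by
    calc (D : ℝ) * c = ∑ j : Fin D, ∑ i, e j i * v i := by simp [h]
      _ = ∑ i, (∑ j, e j) i * v i := by
        rw [Finset.sum_comm]; simp [Finset.sum_mul]
      _ = 0 := by rw [hsum]; simp
  have hc : c = 0 := by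
    rcases mul_eq_zero.1 h1 with h2 | h2
    · have : D = 0 := by exact_mod_cast h2
      omega
    · exact h2
  have h3 : ∀ x ∈ Submodule.span ℝ (Set.range e), x ⬝ᵥ v = 0 := by
    intro x hx
    induction hx using Submodule.span_induction with
    | mem x hx =>
      obtain ⟨j, rfl⟩ := hx
      exact (h j).trans hc
    | zero => simp
    | add x y _ _ hx hy => simp [add_dotProduct, hx, hy]
    | smul a x _ hx => simp [smul_dotProduct, hx]
  exact dotProduct_self_eq_zero.1 (h3 v (by rw [hspan]; trivial))

lemma term_nonneg (x : ℝ) : 0 ≤ (Real.exp x - 1) * x := by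
  rcases le_total 0 x with h | h
  · exact mul_nonneg (by linarith [Real.one_le_exp h]) h
  · exact mul_nonneg_of_nonpos_of_nonpos (by linarith [Real.exp_le_one_iff.2 h]) h

lemma inj (hD : 1 ≤ D) (e : Fin D → (Fin d → ℝ))
    (hspan : Submodule.span ℝ (Set.range e) = ⊤) (hsum : ∑ j, e j = 0) :
    Function.Injective (gradFreeEnergy d D e) := by
  intro α β hab
  have hp := grad_pair e α (β - α)
  have hq := grad_pair e β (β - α)
  rw [hab, hq] at hp
  clear hq
  set a : Fin D → ℝ := fun j => ∑ i, e j i * α i with ha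
  set b : Fin D → ℝ := fun j => ∑ i, e j i * β i with hb
  have hv : ∀ j, ∑ i, e j i * (β - α) i = b j - a j := by
    intro j; simp [ha, hb, mul_sub]
  simp only [hv] at hp
  have hA := Z_pos hD a
  have hB := Z_pos hD b
  change ∑ j, (∑ k, Real.exp (b k))⁻¹ * Real.exp (b j) * (b j - a j) =
    ∑ j, (∑ k, Real.exp (a k))⁻¹ * Real.exp (a j) * (b j - a j) at hp
  have nA : ∑ j, (∑ k, Real.exp (a k))⁻¹ * Real.exp (a j) = 1 := by
    rw [← Finset.mul_sum]; exact inv_mul_cancel₀ hA.ne'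
  have nB : ∑ j, (∑ k, Real.exp (b k))⁻¹ * Real.exp (b j) = 1 := by
    rw [← Finset.mul_sum]; exact inv_mul_cancel₀ hB.ne'
  set A := ∑ k, Real.exp (a k)
  set B := ∑ k, Real.exp (b k)
  set c := Real.log B - Real.log A with hc
  have hs : ∑ j, A⁻¹ * Real.exp (a j) * ((Real.exp (b j - a j - c) - 1) * (b j - a j - c)) = 0 := by
    have : ∀ j, A⁻¹ * Real.exp (a j) * ((Real.exp (b j - a j - c) - 1) * (b j - a j - c)) =
        B⁻¹ * Real.exp (b j) * (b j - a j) - A⁻¹ * Real.exp (a j) * (b j - a j)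
         - c * (B⁻¹ * Real.exp (b j)) + c * (A⁻¹ * Real.exp (a j)) := by
      intro j
      have h1 : Real.exp (b j - a j - c) = Real.exp (b j) / Real.exp (a j) / (B / A) := by
        rw [Real.exp_sub, Real.exp_sub, hc, Real.exp_sub, Real.exp_log hA, Real.exp_log hB]
      rw [h1]
      have := Real.exp_pos (a j)
      field_simp
      ring
    simp only [this, Finset.sum_add_distrib, Finset.sum_sub_distrib, hp]
    rw [← Finset.mul_sum Finset.univ (fun j => B⁻¹ * Real.exp (b j)) c,
      ← Finset.mul_sum Finset.univ (fun j => A⁻¹ * Real.exp (a j)) c, nA, nB]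
    ring
  have hz := (Finset.sum_eq_zero_iff_of_nonneg (fun j _ => mul_nonneg
    (mul_nonneg (inv_nonneg.2 hA.le) (Real.exp_pos (a j)).le)
      (term_nonneg (b j - a j - c)))).1 hs
  have hfin : β - α = 0 := by
    refine eq_zero_of_const hD e hspan hsum _ c fun j => ?_
    rw [hv]
    have h1 := hz j (Finset.mem_univ _)
    have h2 : A⁻¹ * Real.exp (a j) ≠ 0 := (mul_pos (inv_pos.2 hA) (Real.exp_pos _)).ne'
    rcases mul_eq_zero.1 ((mul_eq_zero.1 h1).resolve_left h2) with h3 | h3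
    · have : Real.exp (b j - a j - c) = 1 := by linarith
      have := (Real.exp_eq_one_iff _).1 this
      linarith
    · linarith
  exact (sub_eq_zero.1 hfin).symm

lemma range_sub (hD : 1 ≤ D) (e : Fin D → (Fin d → ℝ))
    (hspan : Submodule.span ℝ (Set.range e) = ⊤) (hsum : ∑ j, e j = 0) :
    Set.range (gradFreeEnergy d D e) ⊆ interior (convexHull ℝ (Set.range e)) := by
  let L : (Fin D → ℝ) →ₗ[ℝ] (Fin d → ℝ) := Fintype.linearCombination ℝ e
  have hL : ∀ t, L t = ∑ j, t j • e j := fun t => Fintype.linearCombination_apply ℝ e t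
  have hLs : Function.Surjective L := by
    rw [← LinearMap.range_eq_top, Fintype.range_linearCombination, hspan]
  have hLo : IsOpenMap L := by
    have := (LinearMap.toContinuousLinearMap L).isOpenMap hLs
    exact this
  have hD0 : (D : ℝ) ≠ 0 := by
    have : D ≠ 0 := by omega
    exact_mod_cast this
  let U : Set (Fin D → ℝ) := {t | ∀ j, 0 < t j + (1 - ∑ k, t k) / D}
  have hU : IsOpen U := by
    simp only [U, Set.ofPred_forall]
    exact isOpen_iInter_of_finite fun j => isOpen_lt continuous_const (by fun_prop)
  have hsub : L '' U ⊆ convexHull ℝ (Set.range e) := by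
    rintro _ ⟨t, ht, rfl⟩
    have h1 : L t = ∑ j, (t j + (1 - ∑ k, t k) / D) • e j := by
      simp only [add_smul, Finset.sum_add_distrib, ← Finset.smul_sum, hsum, smul_zero, add_zero, hL]
    rw [h1]
    refine (convex_convexHull ℝ _).sum_mem (fun j _ => (ht j).le) ?_
      (fun j _ => subset_convexHull ℝ _ ⟨j, rfl⟩)
    simp only [Finset.sum_add_distrib, Finset.sum_const, Finset.card_univ, Fintype.card_fin,
      nsmul_eq_mul]
    field_simp
    ring
  rintro _ ⟨α, rfl⟩
  refine interior_maximal hsub (hLo U hU) ?_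
  have hA := Z_pos hD (fun k => ∑ i, e k i * α i)
  refine ⟨fun j => (∑ k, Real.exp (∑ i, e k i * α i))⁻¹ * Real.exp (∑ i, e j i * α i), ?_, ?_⟩
  · intro j
    simp only
    rw [← Finset.mul_sum, inv_mul_cancel₀ hA.ne']
    simp only [sub_self, zero_div, add_zero]
    exact mul_pos (inv_pos.2 hA) (Real.exp_pos _)
  · rw [hL]
    simp only [gradFreeEnergy, Finset.smul_sum, smul_smul]

lemma sub_range (hD : 1 ≤ D) (e : Fin D → (Fin d → ℝ)) :
    interior (convexHull ℝ (Set.range e)) ⊆ Set.range (gradFreeEnergy d D e) := by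
  intro y hy
  obtain ⟨r, hr, hball⟩ := Metric.isOpen_iff.1 isOpen_interior y hy
  let G : (Fin d → ℝ) → ℝ := fun α =>
    Real.log (∑ k, Real.exp (∑ i, e k i * α i)) - ∑ i, y i * α i
  have hcont : Continuous G := by
    have : Continuous fun α : Fin d → ℝ => Real.log (∑ k, Real.exp (∑ i, e k i * α i)) :=
      Continuous.log (by fun_prop) (fun α => (Z_pos hD _).ne')
    exact this.sub (by fun_prop)
  have hmax : ∀ α : Fin d → ℝ, ∀ w ∈ convexHull ℝ (Set.range e),
      ∑ i, w i * α i ≤ Real.log (∑ k, Real.exp (∑ i, e k i * α i)) := by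
    intro α w hw
    have hconv : Convex ℝ {w : Fin d → ℝ | ∑ i, w i * α i ≤
        Real.log (∑ k, Real.exp (∑ i, e k i * α i))} := by
      refine convex_halfSpace_le ⟨?_, ?_⟩ _
      · intro x z; simp [add_mul, Finset.sum_add_distrib]
      · intro a x; simp [Finset.mul_sum, mul_assoc]
    refine convexHull_min ?_ hconv hw
    rintro _ ⟨j, rfl⟩
    refine (Real.le_log_iff_exp_le (Z_pos hD _)).2 ?_
    exact Finset.single_le_sum (f := fun k => Real.exp (∑ i, e k i * α i))
      (fun _ _ => (Real.exp_pos _).le) (Finset.mem_univ j)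
  have hlow : ∀ α, r / 2 * ‖α‖ ≤ G α := by
    intro α
    have hsq : ‖α‖ ^ 2 ≤ ∑ i, α i * α i := by
      have h0 : 0 ≤ ∑ i, α i * α i := Finset.sum_nonneg fun i _ => mul_self_nonneg _
      refine (Real.le_sqrt (norm_nonneg _) h0).1 ?_
      refine (pi_norm_le_iff_of_nonneg (Real.sqrt_nonneg _)).2 fun i => ?_
      refine (Real.le_sqrt (norm_nonneg _) h0).2 ?_
      rw [Real.norm_eq_abs, sq_abs, sq]
      exact Finset.single_le_sum (f := fun i => α i * α i)
        (fun i _ => mul_self_nonneg _) (Finset.mem_univ i)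
    by_cases h0 : α = 0
    · have := hmax α y (interior_subset hy)
      simp only [G]
      rw [h0] at this ⊢
      simp only [norm_zero, mul_zero]
      linarith
    · have hn : 0 < ‖α‖ := norm_pos_iff.2 h0
      have hw : y + (r / 2 / ‖α‖) • α ∈ convexHull ℝ (Set.range e) := by
        refine interior_subset (hball ?_)
        rw [Metric.mem_ball, dist_eq_norm, add_sub_cancel_left, norm_smul, Real.norm_eq_abs,
          abs_of_pos (by positivity), div_mul_cancel₀ _ hn.ne']
        linarith
      have := hmax α _ hw
      simp only [Pi.add_apply, Pi.smul_apply, smul_eq_mul, add_mul, Finset.sum_add_distrib,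
        mul_assoc, ← Finset.mul_sum] at this
      have h2 : r / 2 * ‖α‖ ≤ r / 2 / ‖α‖ * ∑ i, α i * α i := by
        calc r / 2 * ‖α‖ = r / 2 / ‖α‖ * ‖α‖ ^ 2 := by field_simp
          _ ≤ _ := by gcongr
      simp only [G]
      linarith
  have hcoer : Filter.Tendsto G (Filter.cocompact _) Filter.atTop :=
    Filter.tendsto_atTop_mono hlow
      ((tendsto_norm_cocompact_atTop).const_mul_atTop (by positivity))
  obtain ⟨α, hα⟩ := hcont.exists_forall_le hcoer
  refine ⟨α, ?_⟩
  funext i₀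
  have hder : HasDerivAt (fun t : ℝ => Real.log (∑ k, Real.exp ((∑ i, e k i * α i) + t * e k i₀))
      - ((∑ i, y i * α i) + t * y i₀))
      ((∑ k, Real.exp ((∑ i, e k i * α i) + 0 * e k i₀) * (1 * e k i₀)) /
        (∑ k, Real.exp ((∑ i, e k i * α i) + 0 * e k i₀)) - 1 * y i₀) 0 := by
    refine HasDerivAt.sub (HasDerivAt.log ?_ (Z_pos hD _).ne') ?_
    · exact HasDerivAt.fun_sum fun k _ =>
        (((hasDerivAt_id (0 : ℝ)).mul_const (e k i₀)).const_add _).exp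
    · exact ((hasDerivAt_id (0 : ℝ)).mul_const (y i₀)).const_add _
  have hG : ∀ t : ℝ, G (α + t • Pi.single i₀ 1) =
      Real.log (∑ k, Real.exp ((∑ i, e k i * α i) + t * e k i₀))
      - ((∑ i, y i * α i) + t * y i₀) := by
    have key : ∀ (t : ℝ) (x : Fin d → ℝ), ∑ i, x i * (α + t • (Pi.single i₀ 1 : Fin d → ℝ)) i =
        (∑ i, x i * α i) + t * x i₀ := by
      intro t x
      simp [mul_add, Finset.sum_add_distrib, Pi.single_apply, mul_comm]
    intro t
    simp only [G, key]
  have hmin : IsLocalMin (fun t : ℝ => Real.log (∑ k, Real.exp ((∑ i, e k i * α i) + t * e k i₀))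
      - ((∑ i, y i * α i) + t * y i₀)) 0 := by
    refine Filter.Eventually.of_forall fun t => ?_
    simp only [← hG]
    simpa using hα (α + t • Pi.single i₀ 1)
  have h := hmin.hasDerivAt_eq_zero hder
  simp only [zero_mul, add_zero, one_mul] at h
  simp only [gradFreeEnergy, Pi.smul_apply, Finset.sum_apply, smul_eq_mul]
  rw [div_eq_inv_mul] at h
  linarith

end GradAux

/-- The gradient map `∇F : ℝ^d → ℝ^d` is injective and its range is exactly the interior
of the Newton polytope `N = convexHull {e_1, …, e_D}`; that is, `∇F` is a bijection from
`ℝ^d` onto the interior of `N`. -/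
theorem gradFreeEnergy_bijection_onto_interior
    (d D : ℕ) (hd : 1 ≤ d) (hD : 1 ≤ D)
    (e : Fin D → (Fin d → ℝ))
    (hspan : Submodule.span ℝ (Set.range e) = ⊤)
    (hsum : ∑ j, e j = 0) :
    Function.Injective (gradFreeEnergy d D e) ∧
    Set.range (gradFreeEnergy d D e) = interior (convexHull ℝ (Set.range e)) := by
  exact ⟨GradAux.inj hD e hspan hsum,
    Set.Subset.antisymm (GradAux.range_sub hD e hspan hsum) (GradAux.sub_range hD e)⟩
end

section
/- Surface tension blow-up: let s_0 be a point of the boundary (frontier) of the Newton polytope N and let v ∈ ℝ^d be a direction such that s_0 + εv lies in the interior of N for all sufficiently small ε > 0. Then the difference quotient (σ(s_0 + εv) − σ(s_0))/ε tends to −∞ as ε → 0^+. -/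
noncomputable def bary {d D : ℕ} (e : Fin D → (Fin d → ℝ)) : (Fin D → ℝ) →ₗ[ℝ] (Fin d → ℝ) :=
  ∑ j, (LinearMap.proj j : (Fin D → ℝ) →ₗ[ℝ] ℝ).smulRight (e j)

lemma bary_apply {d D : ℕ} (e : Fin D → (Fin d → ℝ)) (p : Fin D → ℝ) :
    bary e p = ∑ j, p j • e j := by
  simp [bary]

lemma hull_eq {d D : ℕ} (e : Fin D → (Fin d → ℝ)) :
    convexHull ℝ (Set.range e) = bary e '' stdSimplex ℝ (Fin D) := by
  apply Set.Subset.antisymm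
  · apply convexHull_min
    · rintro _ ⟨j, rfl⟩
      refine ⟨Pi.single j 1, single_mem_stdSimplex ℝ j, ?_⟩
      simp [bary_apply, Pi.single_apply]
    · exact (convex_stdSimplex ℝ _).linear_image _
  · rintro _ ⟨p, hp, rfl⟩
    rw [bary_apply]
    exact (convex_convexHull ℝ _).sum_mem (fun j _ => hp.1 j) hp.2
      (fun j _ => subset_convexHull ℝ _ ⟨j, rfl⟩)

noncomputable def ent {D : ℕ} (p : Fin D → ℝ) : ℝ := ∑ j, p j * Real.log (p j)

lemma ent_cont {D : ℕ} : Continuous (ent : (Fin D → ℝ) → ℝ) := by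
  unfold ent
  exact continuous_finsetSum _ fun j _ => Real.continuous_mul_log.comp (continuous_apply j)

lemma ent_nonpos {D : ℕ} {p : Fin D → ℝ} (hp : p ∈ stdSimplex ℝ (Fin D)) : ent p ≤ 0 := by
  apply Finset.sum_nonpos
  intro j _
  have h1 : p j ≤ 1 := by
    rw [← hp.2]
    exact Finset.single_le_sum (fun i _ => hp.1 i) (Finset.mem_univ j)
  exact mul_nonpos_of_nonneg_of_nonpos (hp.1 j) (Real.log_nonpos (hp.1 j) h1)

lemma dot_bary {d D : ℕ} (e : Fin D → (Fin d → ℝ)) (p : Fin D → ℝ) (α : Fin d → ℝ) :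
    ∑ i, bary e p i * α i = ∑ j, p j * ∑ i, e j i * α i := by
  simp only [bary_apply, Finset.sum_apply, Pi.smul_apply, smul_eq_mul, Finset.sum_mul,
    Finset.mul_sum]
  rw [Finset.sum_comm]
  simp only [mul_assoc]

lemma Z_pos {d D : ℕ} (hD : 1 ≤ D) (e : Fin D → (Fin d → ℝ)) (α : Fin d → ℝ) :
    0 < ∑ j, Real.exp (∑ i, e j i * α i) := by
  apply Finset.sum_pos (fun j _ => Real.exp_pos _)
  exact ⟨⟨0, hD⟩, Finset.mem_univ _⟩

lemma gibbs_sum {d D : ℕ} (hD : 1 ≤ D) (e : Fin D → (Fin d → ℝ)) (α : Fin d → ℝ) :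
    ∑ j, Real.exp (∑ i, e j i * α i - freeEnergy d D e α) = 1 := by
  have h := Z_pos hD e α
  simp only [Real.exp_sub, freeEnergy, Real.exp_log h]
  rw [← Finset.sum_div, div_self h.ne']

lemma gibbs_le {d D : ℕ} (hD : 1 ≤ D) (e : Fin D → (Fin d → ℝ)) {p : Fin D → ℝ}
    (hp : p ∈ stdSimplex ℝ (Fin D)) (α : Fin d → ℝ) :
    ∑ i, bary e p i * α i - freeEnergy d D e α ≤ ent p := by
  rw [dot_bary]
  have key : ∀ j, p j * (∑ i, e j i * α i) - p j * freeEnergy d D e α - p j * Real.log (p j)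
      ≤ Real.exp (∑ i, e j i * α i - freeEnergy d D e α) - p j := by
    intro j
    generalize (∑ i, e j i * α i) = x
    generalize freeEnergy d D e α = F
    rcases (hp.1 j).eq_or_lt with h | h
    · rw [← h]; simp [Real.exp_nonneg]
    · have := Real.add_one_le_exp (x - F - Real.log (p j))
      rw [Real.exp_sub, Real.exp_log h, le_div_iff₀ h] at this
      linarith
  have := Finset.sum_le_sum (fun j (_ : j ∈ Finset.univ) => key j)
  simp only [Finset.sum_sub_distrib, gibbs_sum hD, hp.2, ← Finset.sum_mul] at this
  unfold ent
  linarith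

lemma surf_le {d D : ℕ} (hD : 1 ≤ D) (e : Fin D → (Fin d → ℝ)) {p : Fin D → ℝ}
    (hp : p ∈ stdSimplex ℝ (Fin D)) : surfTension d D e (bary e p) ≤ ent p := by
  apply csSup_le (Set.range_nonempty _)
  rintro _ ⟨α, rfl⟩
  exact gibbs_le hD e hp α

lemma le_surf {d D : ℕ} (hD : 1 ≤ D) (e : Fin D → (Fin d → ℝ)) {p : Fin D → ℝ}
    (hp : p ∈ stdSimplex ℝ (Fin D)) (α : Fin d → ℝ) :
    ∑ i, bary e p i * α i - freeEnergy d D e α ≤ surfTension d D e (bary e p) := by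
  apply le_csSup
  · refine ⟨ent p, ?_⟩
    rintro _ ⟨α, rfl⟩
    exact gibbs_le hD e hp α
  · exact ⟨α, rfl⟩

lemma ent_conv {D : ℕ} : ConvexOn ℝ (stdSimplex ℝ (Fin D)) (ent : (Fin D → ℝ) → ℝ) := by
  refine ⟨convex_stdSimplex ℝ _, ?_⟩
  intro p hp q hq a b ha hb hab
  simp only [ent, smul_eq_mul, Finset.mul_sum, ← Finset.sum_add_distrib]
  apply Finset.sum_le_sum
  intro j _
  exact Real.convexOn_mul_log.2 (hp.1 j) (hq.1 j) ha hb hab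

lemma exists_opt {d D : ℕ} (hD : 1 ≤ D) (e : Fin D → (Fin d → ℝ)) {p : Fin D → ℝ}
    (hp : p ∈ stdSimplex ℝ (Fin D)) :
    ∃ q ∈ stdSimplex ℝ (Fin D), bary e q = bary e p ∧
      ent q ≤ surfTension d D e (bary e p) := by
  by_contra! hcon
  set s := bary e p with hs
  set t₀ := surfTension d D e s with ht₀
  have ht0 : t₀ ≤ 0 := (surf_le hD e hp).trans (ent_nonpos hp)
  let K : Set ((Fin D → ℝ) × ℝ) :=
    {x | x.1 ∈ stdSimplex ℝ (Fin D) ∧ ent x.1 ≤ x.2 ∧ x.2 ≤ 1}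
  have hKconv : Convex ℝ K := by
    have h1 := (ent_conv (D := D)).convex_epigraph
    rintro x ⟨hx1, hx2, hx3⟩ y ⟨hy1, hy2, hy3⟩ a b ha hb hab
    have := h1 (x := x) ⟨hx1, hx2⟩ (y := y) ⟨hy1, hy2⟩ ha hb hab
    refine ⟨this.1, this.2, ?_⟩
    simp only [Prod.snd_add, Prod.smul_snd, smul_eq_mul]
    nlinarith
  have hKcomp : IsCompact K := by
    obtain ⟨m, hm⟩ := (isCompact_stdSimplex ℝ (Fin D)).bddBelow_image
      (ent_cont (D := D)).continuousOn
    apply ((isCompact_stdSimplex ℝ (Fin D)).prod (isCompact_Icc (a := m) (b := 1))).of_isClosed_subset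
    · exact ((isClosed_stdSimplex ℝ (Fin D)).preimage continuous_fst).inter
        ((isClosed_le (ent_cont.comp continuous_fst) continuous_snd).inter
          (isClosed_le continuous_snd continuous_const))
    · rintro x ⟨hx1, hx2, hx3⟩
      exact ⟨hx1, (hm ⟨_, hx1, rfl⟩).trans hx2, hx3⟩
  let L : ((Fin D → ℝ) × ℝ) →ₗ[ℝ] ((Fin d → ℝ) × ℝ) := (bary e).prodMap LinearMap.id
  have hLc : Continuous L := L.continuous_of_finiteDimensional
  have hnot : (s, t₀) ∉ L '' K := by
    rintro ⟨⟨q, t⟩, ⟨hq1, hq2, _⟩, hq⟩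
    simp only [L, LinearMap.prodMap_apply, LinearMap.id_apply, Prod.mk.injEq] at hq
    have := hcon q hq1 hq.1
    simp only at hq2
    linarith [hq.2]
  obtain ⟨f, u, hfu, hf⟩ := geometric_hahn_banach_point_closed (hKconv.linear_image L)
    (hKcomp.image hLc).isClosed hnot
  have hsep : ∀ q ∈ stdSimplex ℝ (Fin D), ∀ t, ent q ≤ t → t ≤ 1 →
      f (s, t₀) < f (bary e q, t) := fun q hq t h1 h2 =>
    hfu.trans (hf _ ⟨(q, t), ⟨hq, h1, h2⟩, rfl⟩)
  set b := f (0, 1) with hb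
  have hdec : ∀ (x : Fin d → ℝ) (t : ℝ), f (x, t) = ∑ i, x i * f (Pi.single i 1, 0) + t * b := by
    intro x t
    have h1 : (x, t) = ∑ i, x i • ((Pi.single i 1 : Fin d → ℝ), (0:ℝ)) + t • ((0 : Fin d → ℝ), (1:ℝ)) := by
      ext i
      · simp [Prod.fst_sum, Finset.sum_apply, Pi.single_apply]
      · simp [Prod.snd_sum]
    rw [h1, map_add, map_sum, map_smul]
    simp only [map_smul, smul_eq_mul, hb]
  have hbpos : 0 < b := by
    have := hsep p hp 1 ((ent_nonpos hp).trans zero_le_one) le_rfl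
    rw [hdec, hdec] at this
    nlinarith
  let α : Fin d → ℝ := fun i => - f (Pi.single i 1, 0) / b
  have hfα : ∀ x t, f (x, t) = b * (t - ∑ i, x i * α i) := by
    intro x t
    rw [hdec, mul_sub, Finset.mul_sum]
    have : ∀ i, b * (x i * α i) = - (x i * f (Pi.single i 1, 0)) := by
      intro i
      simp only [α]
      field_simp
    simp only [this, Finset.sum_neg_distrib]
    ring
  let g : Fin D → ℝ := fun j => Real.exp (∑ i, e j i * α i - freeEnergy d D e α)
  have hg : g ∈ stdSimplex ℝ (Fin D) := ⟨fun j => (Real.exp_pos _).le, gibbs_sum hD e α⟩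
  have hgent : ent g = ∑ i, bary e g i * α i - freeEnergy d D e α := by
    rw [dot_bary]
    simp only [ent]
    have : ∀ j, g j * Real.log (g j) = g j * (∑ i, e j i * α i) - g j * freeEnergy d D e α := by
      intro j
      rw [← mul_sub]
      simp only [g, Real.log_exp]
    simp only [this, Finset.sum_sub_distrib, ← Finset.sum_mul, hg.2, one_mul]
  have h := hsep g hg (ent g) le_rfl ((ent_nonpos hg).trans zero_le_one)
  rw [hfα, hfα] at h
  have h2 := lt_of_mul_lt_mul_left h hbpos.le
  have h3 := le_surf hD e hp α
  rw [← hs, ← ht₀] at h3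
  linarith

lemma exists_pos {d D : ℕ} (hD : 1 ≤ D) (e : Fin D → (Fin d → ℝ)) (hsum : ∑ j, e j = 0)
    {y : Fin d → ℝ} (hy : y ∈ interior (convexHull ℝ (Set.range e))) :
    ∃ p ∈ stdSimplex ℝ (Fin D), bary e p = y ∧ ∀ j, 0 < p j := by
  have hc : Filter.Tendsto (fun η : ℝ => (1 + η) • y) (nhdsWithin 0 (Set.Ioi 0)) (nhds y) := by
    have : Continuous (fun η : ℝ => (1 + η) • y) := by fun_prop
    have h := this.tendsto 0
    simp only [add_zero, one_smul] at h
    exact h.mono_left nhdsWithin_le_nhds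
  have h1 := hc.eventually (isOpen_interior.mem_nhds hy)
  obtain ⟨η, hη, hη0⟩ := (h1.and self_mem_nhdsWithin).exists
  have hη0 : 0 < η := hη0
  have hη := interior_subset hη
  rw [hull_eq] at hη
  obtain ⟨q, hq, hqy⟩ := hη
  have hDpos : (0:ℝ) < D := by exact_mod_cast hD
  have hpos : 0 < 1 + η := by linarith
  have hbc : bary e (fun _ => (D:ℝ)⁻¹) = 0 := by
    rw [bary_apply, ← Finset.smul_sum, hsum, smul_zero]
  refine ⟨(1 + η)⁻¹ • q + (η / (1 + η)) • (fun _ => (D:ℝ)⁻¹), ?_, ?_, ?_⟩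
  · apply convex_stdSimplex ℝ _ hq _ (by positivity) (by positivity)
    · field_simp
    · refine ⟨fun _ => by positivity, ?_⟩
      simp [hDpos.ne']
  · rw [map_add, map_smul, map_smul, hbc, hqy, smul_zero, add_zero, smul_smul,
      inv_mul_cancel₀ hpos.ne', one_smul]
  · intro j
    have := hq.1 j
    simp only [Pi.add_apply, Pi.smul_apply, smul_eq_mul]
    positivity

theorem surfTension_blowup_at_boundary
    (d D : ℕ) (hd : 1 ≤ d) (hD : 1 ≤ D)
    (e : Fin D → (Fin d → ℝ))
    (hspan : Submodule.span ℝ (Set.range e) = ⊤)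
    (hsum : ∑ j, e j = 0)
    (s₀ v : Fin d → ℝ)
    (hs₀ : s₀ ∈ frontier (convexHull ℝ (Set.range e)))
    (hv : ∀ᶠ ε in nhdsWithin (0 : ℝ) (Set.Ioi 0),
      s₀ + ε • v ∈ interior (convexHull ℝ (Set.range e))) :
    Filter.Tendsto
      (fun ε : ℝ => (surfTension d D e (s₀ + ε • v) - surfTension d D e s₀) / ε)
      (nhdsWithin (0 : ℝ) (Set.Ioi 0)) Filter.atBot := by
  have hNclosed : IsClosed (convexHull ℝ (Set.range e)) := by
    rw [hull_eq]
    exact ((isCompact_stdSimplex ℝ (Fin D)).image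
      (bary e).continuous_of_finiteDimensional).isClosed
  have hs₀N : s₀ ∈ convexHull ℝ (Set.range e) := hNclosed.frontier_subset hs₀
  have hs₀I : s₀ ∉ interior (convexHull ℝ (Set.range e)) := hs₀.2
  rw [hull_eq] at hs₀N
  obtain ⟨p, hp, hps⟩ := hs₀N
  obtain ⟨p₀, hp₀, hp₀s, hent⟩ := exists_opt hD e hp
  rw [hps] at hp₀s hent
  obtain ⟨ε₁, hε₁, hε₁0⟩ := (hv.and self_mem_nhdsWithin).exists
  have hε₁0 : 0 < ε₁ := hε₁0
  obtain ⟨p₁, hp₁, hp₁s, hp₁pos⟩ := exists_pos hD e hsum hε₁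
  have hzero : ∃ j, p₀ j = 0 := by
    by_contra! hne
    have hpos : ∀ j, 0 < p₀ j := fun j => lt_of_le_of_ne (hp₀.1 j) (hne j).symm
    have hev : ∀ᶠ t in nhdsWithin (0:ℝ) (Set.Ioi 0), ∀ j, 0 < (1 + t) * p₀ j - t * p₁ j := by
      rw [Filter.eventually_all]
      intro j
      have : Continuous (fun t : ℝ => (1 + t) * p₀ j - t * p₁ j) := by fun_prop
      have h := this.tendsto 0
      simp only [add_zero, one_mul, zero_mul, sub_zero] at h
      exact (h.mono_left nhdsWithin_le_nhds).eventually (lt_mem_nhds (hpos j))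
    obtain ⟨t, ht, ht0⟩ := (hev.and self_mem_nhdsWithin).exists
    have ht0 : 0 < t := ht0
    have hx : bary e ((1 + t) • p₀ - t • p₁) ∈ convexHull ℝ (Set.range e) := by
      rw [hull_eq]
      refine ⟨_, ⟨fun j => (ht j).le, ?_⟩, rfl⟩
      simp only [Pi.sub_apply, Pi.smul_apply, smul_eq_mul, Finset.sum_sub_distrib,
        ← Finset.mul_sum, hp₀.2, hp₁.2]
      ring
    apply hs₀I
    have hpos : 0 < 1 + t := by linarith
    have := (convex_convexHull ℝ (Set.range e)).combo_interior_self_mem_interior hε₁ hx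
      (a := t / (1 + t)) (b := (1 + t)⁻¹) (by positivity) (by positivity) (by field_simp; ring)
    convert this using 1
    rw [map_sub, map_smul, map_smul, hp₀s, hp₁s]
    ext i
    simp only [Pi.add_apply, Pi.sub_apply, Pi.smul_apply, smul_eq_mul]
    field_simp
    ring
  obtain ⟨j₀, hj₀⟩ := hzero
  set a := p₁ j₀ with ha
  have hapos : 0 < a := hp₁pos j₀
  have hlim : Filter.Tendsto (fun ε : ℝ => ε₁⁻¹ * ((ent p₁ - ent p₀) + a * Real.log (ε / ε₁)))
      (nhdsWithin (0 : ℝ) (Set.Ioi 0)) Filter.atBot := by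
    apply Filter.Tendsto.const_mul_atBot (inv_pos.2 hε₁0)
    apply Filter.tendsto_atBot_add_const_left
    apply Filter.Tendsto.const_mul_atBot hapos
    apply Real.tendsto_log_nhdsGT_zero.comp
    apply tendsto_nhdsWithin_iff.2 ⟨?_, ?_⟩
    · have : Continuous (fun ε : ℝ => ε / ε₁) := by fun_prop
      have h := this.tendsto 0
      simp only [zero_div] at h
      exact h.mono_left nhdsWithin_le_nhds
    · filter_upwards [self_mem_nhdsWithin] with ε hε
      exact div_pos hε hε₁0
  apply Filter.tendsto_atBot_mono' _ _ hlim
  filter_upwards [Ioo_mem_nhdsGT hε₁0] with ε hε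
  obtain ⟨hε0, hεlt⟩ := hε
  set t := ε / ε₁ with ht
  have ht0 : 0 < t := div_pos hε0 hε₁0
  have ht1 : t < 1 := (div_lt_one hε₁0).2 hεlt
  have hεt : ε = t * ε₁ := by rw [ht]; field_simp
  have hmem : (1 - t) • p₀ + t • p₁ ∈ stdSimplex ℝ (Fin D) :=
    convex_stdSimplex ℝ _ hp₀ hp₁ (by linarith) ht0.le (by ring)
  have hb : bary e ((1 - t) • p₀ + t • p₁) = s₀ + ε • v := by
    rw [map_add, map_smul, map_smul, hp₀s, hp₁s, hεt]
    module
  have h1 := surf_le hD e hmem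
  rw [hb] at h1
  have h2 : ent ((1 - t) • p₀ + t • p₁) ≤ (1 - t) * ent p₀ + t * ent p₁ + t * a * Real.log t := by
    have hterm : ∀ j, ((1 - t) • p₀ + t • p₁) j * Real.log (((1 - t) • p₀ + t • p₁) j) ≤
        (1 - t) * (p₀ j * Real.log (p₀ j)) + t * (p₁ j * Real.log (p₁ j)) +
          (if j = j₀ then t * a * Real.log t else 0) := by
      intro j
      split_ifs with h
      · subst h
        simp only [Pi.add_apply, Pi.smul_apply, smul_eq_mul, hj₀, mul_zero, zero_add, zero_mul]
        rw [← ha, Real.log_mul ht0.ne' hapos.ne']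
        apply le_of_eq
        ring
      · rw [add_zero]
        exact Real.convexOn_mul_log.2 (hp₀.1 j) (hp₁.1 j) (by linarith) ht0.le (by ring)
    have := Finset.sum_le_sum (fun j (_ : j ∈ Finset.univ) => hterm j)
    simp only [Finset.sum_add_distrib, ← Finset.mul_sum, Finset.sum_ite_eq', Finset.mem_univ,
      if_true] at this
    exact this
  rw [div_le_iff₀ hε0]
  have h3 : ε₁⁻¹ * ((ent p₁ - ent p₀) + a * Real.log t) * ε
      = t * ((ent p₁ - ent p₀) + a * Real.log t) := by
    rw [hεt]; field_simp
  rw [h3]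
  linarith
end

section
/- Explicit surface tension for hypercubic (body-centered) lattices: for every d ≥ 1 and every s = (s_1, …, s_d) ∈ [−1/2, 1/2]^d, sup_{α ∈ ℝ^d} ( Σ_{i=1}^d s_i α_i − Σ_{i=1}^d log(exp(α_i/2) + exp(−α_i/2)) ) = Σ_{i=1}^d [ ((1+2s_i)/2)·log((1+2s_i)/2) + ((1−2s_i)/2)·log((1−2s_i)/2) ], where by convention 0·log 0 = 0 (as is automatic with Lean's Real.log 0 = 0). -/
theorem aux_logZ (a : ℝ) : Real.log (Real.exp (a / 2) + Real.exp (-a / 2))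
    = -a / 2 + Real.log (Real.exp a + 1) := by
  have h : Real.exp (a / 2) + Real.exp (-a / 2) = Real.exp (-a / 2) * (Real.exp a + 1) := by
    rw [mul_add, ← Real.exp_add, mul_one]
    congr 2
    ring
  rw [h, Real.log_mul (Real.exp_pos _).ne' (by positivity), Real.log_exp]

theorem aux_gibbs_s6 (p u : ℝ) (hp : 0 ≤ p) (hu : 0 < u) :
    p * Real.log u ≤ p * Real.log p + u - p := by
  rcases hp.eq_or_lt with rfl | hp
  · simp [hu.le]
  · have h := Real.log_le_sub_one_of_pos (div_pos hu hp)
    rw [Real.log_div hu.ne' hp.ne'] at h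
    have h2 := mul_le_mul_of_nonneg_left h hp.le
    have h3 : p * (u / p - 1) = u - p := by field_simp
    linarith

theorem aux_upper (s a : ℝ) (hs : s ∈ Set.Icc (-(1 / 2) : ℝ) (1 / 2)) :
    s * a - Real.log (Real.exp (a / 2) + Real.exp (-a / 2)) ≤
      ((1 + 2 * s) / 2) * Real.log ((1 + 2 * s) / 2) +
              ((1 - 2 * s) / 2) * Real.log ((1 - 2 * s) / 2) := by
  obtain ⟨h1, h2⟩ := hs
  rw [aux_logZ]
  have hZ : 0 < Real.exp a + 1 := by positivity
  have g1 := aux_gibbs_s6 ((1 + 2 * s) / 2) (Real.exp a / (Real.exp a + 1)) (by linarith)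
    (by positivity)
  have g2 := aux_gibbs_s6 ((1 - 2 * s) / 2) (1 / (Real.exp a + 1)) (by linarith) (by positivity)
  rw [Real.log_div (Real.exp_pos _).ne' hZ.ne', Real.log_exp] at g1
  rw [Real.log_div one_ne_zero hZ.ne', Real.log_one] at g2
  have h3 : Real.exp a / (Real.exp a + 1) + 1 / (Real.exp a + 1) = 1 := by
    rw [← add_div, div_self hZ.ne']
  linarith

theorem aux_value (s e : ℝ) (hs : s ∈ Set.Icc (-(1 / 2) : ℝ) (1 / 2)) (he : 0 < e) (a : ℝ)
    (ha : a = Real.log ((1 + 2 * s) / 2 + e) - Real.log ((1 - 2 * s) / 2 + e)) :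
    s * a - Real.log (Real.exp (a / 2) + Real.exp (-a / 2)) =
      ((1 + 2 * s) / 2) * Real.log ((1 + 2 * s) / 2 + e) +
        ((1 - 2 * s) / 2) * Real.log ((1 - 2 * s) / 2 + e) - Real.log (1 + 2 * e) := by
  obtain ⟨h1, h2⟩ := hs
  have hA : 0 < (1 + 2 * s) / 2 + e := by linarith
  have hB : 0 < (1 - 2 * s) / 2 + e := by linarith
  have hE : Real.exp a + 1 = (1 + 2 * e) / ((1 - 2 * s) / 2 + e) := by
    rw [ha, Real.exp_sub, Real.exp_log hA, Real.exp_log hB, div_add_one hB.ne']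
    congr 1
    ring
  rw [aux_logZ, hE, Real.log_div (by positivity) hB.ne', ha]
  ring

open Filter Topology in
theorem aux_tendsto (p : ℝ) :
    Tendsto (fun e : ℝ => p * Real.log (p + e)) (𝓝[>] 0) (𝓝 (p * Real.log p)) := by
  apply tendsto_nhdsWithin_of_tendsto_nhds
  by_cases hp : p = 0
  · simp [hp]
  · have : ContinuousAt (fun e : ℝ => p * Real.log (p + e)) 0 := by
      apply ContinuousAt.mul continuousAt_const
      apply ContinuousAt.log (by fun_prop) (by simpa using hp)
    simpa [ContinuousAt] using this


/-- Explicit surface tension for hypercubic (body-centered) lattices: for every `d ≥ 1`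
and `s ∈ [−1/2, 1/2]^d`,
`sup_α (Σ_i s_i α_i − Σ_i log(e^{α_i/2} + e^{−α_i/2}))
  = Σ_i [((1+2s_i)/2) log((1+2s_i)/2) + ((1−2s_i)/2) log((1−2s_i)/2)]`,
with the convention `0 · log 0 = 0` (automatic since `Real.log 0 = 0`). -/
theorem surfTension_hypercubic_explicit
    (d : ℕ) (hd : 1 ≤ d)
    (s : Fin d → ℝ) (hs : ∀ i, s i ∈ Set.Icc (-(1 / 2) : ℝ) (1 / 2)) :
    sSup (Set.range fun α : Fin d → ℝ =>
        (∑ i, s i * α i) -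
          ∑ i, Real.log (Real.exp (α i / 2) + Real.exp (-(α i) / 2)))
      = ∑ i, (((1 + 2 * s i) / 2) * Real.log ((1 + 2 * s i) / 2) +
              ((1 - 2 * s i) / 2) * Real.log ((1 - 2 * s i) / 2)) := by
  have hlim : Filter.Tendsto (fun e : ℝ => ∑ i,
      (((1 + 2 * s i) / 2) * Real.log ((1 + 2 * s i) / 2 + e) +
        ((1 - 2 * s i) / 2) * Real.log ((1 - 2 * s i) / 2 + e) - Real.log (1 + 2 * e)))
      (nhdsWithin 0 (Set.Ioi 0)) (nhds (∑ i, (((1 + 2 * s i) / 2) * Real.log ((1 + 2 * s i) / 2) +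
              ((1 - 2 * s i) / 2) * Real.log ((1 - 2 * s i) / 2)))) := by
    apply tendsto_finsetSum
    intro i _
    have hl : Filter.Tendsto (fun e : ℝ => Real.log (1 + 2 * e))
        (nhdsWithin 0 (Set.Ioi 0)) (nhds 0) := by
      apply tendsto_nhdsWithin_of_tendsto_nhds
      have : ContinuousAt (fun e : ℝ => Real.log (1 + 2 * e)) 0 :=
        ContinuousAt.log (by fun_prop) (by simp)
      simpa [ContinuousAt] using this
    simpa using ((aux_tendsto ((1 + 2 * s i) / 2)).add (aux_tendsto ((1 - 2 * s i) / 2))).sub hl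
  have hub : ∀ y ∈ (Set.range fun α : Fin d → ℝ =>
        (∑ i, s i * α i) -
          ∑ i, Real.log (Real.exp (α i / 2) + Real.exp (-(α i) / 2))),
      y ≤ ∑ i, (((1 + 2 * s i) / 2) * Real.log ((1 + 2 * s i) / 2) +
              ((1 - 2 * s i) / 2) * Real.log ((1 - 2 * s i) / 2)) := by
    rintro _ ⟨α, rfl⟩
    simp only []
    rw [← Finset.sum_sub_distrib]
    exact Finset.sum_le_sum fun i _ => aux_upper _ _ (hs i)
  apply le_antisymm
  · exact csSup_le (Set.range_nonempty _) hub
  · refine le_of_tendsto hlim ?_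
    filter_upwards [self_mem_nhdsWithin] with e he
    apply le_csSup ⟨_, hub⟩
    refine ⟨fun i => Real.log ((1 + 2 * s i) / 2 + e) - Real.log ((1 - 2 * s i) / 2 + e), ?_⟩
    simp only []
    rw [← Finset.sum_sub_distrib]
    exact Finset.sum_congr rfl fun i _ => aux_value _ _ (hs i) he _ rfl
end

section
/- Generating function for multinomial dimer partition functions (coefficient form): for every N : V → ℕ and every k ∈ ℕ with Σ_{v ∈ V} N(v) = 2k, the coefficient of the monomial ∏_{v ∈ V} X_v^{N(v)} in the polynomial P^k equals k! · Σ_M ∏_{e ∈ E} w_e^{M(e)} / M(e)!, where the sum is over all M : E → ℕ satisfying Σ_{e incident to v} M(e) = N(v) for every v ∈ V. Equivalently, exp(P) = Σ_N Z_{G,N}(w) · X^N / N!, where Z_{G,N}(w) = Σ_M (∏_v N(v)! / ∏_e M(e)!) · ∏_e w_e^{M(e)} is the multinomial dimer partition function. -/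
lemma prod_monomial_aux {V E : Type*} (s : Finset E) (d : E → V →₀ ℕ) (c : E → ℝ) :
    ∏ e ∈ s, MvPolynomial.monomial (d e) (c e)
      = MvPolynomial.monomial (∑ e ∈ s, d e) (∏ e ∈ s, c e) := by
  classical
  induction s using Finset.induction with
  | empty => simp
  | insert a s ha ih =>
    rw [Finset.prod_insert ha, Finset.sum_insert ha, Finset.prod_insert ha, ih,
      MvPolynomial.monomial_mul]

/-- Generating function for multinomial dimer partition functions (coefficient form):
for a finite graph with vertex set `V`, edge set `E` with endpoint maps `a b : E → V`
(`a e ≠ b e`), edge weights `w`, tiling polynomial `P = Σ_e w_e X_{a e} X_{b e}`,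
vertex multiplicities `N : V → ℕ` and `k` with `Σ_v N v = 2k`, the coefficient of
`∏_v X_v^{N v}` in `P^k` equals `k! · Σ_M ∏_e w_e^{M e} / M e !`, the sum being over
all `M : E → ℕ` with `Σ_{e incident to v} M e = N v` for every `v`. -/
theorem coeff_tilingPolynomial_pow
    {V E : Type*} [Fintype V] [Fintype E] [DecidableEq V]
    (a b : E → V) (hab : ∀ e, a e ≠ b e) (w : E → ℝ)
    (N : V → ℕ) (k : ℕ) (hN : ∑ v, N v = 2 * k) :
    MvPolynomial.coeff (Finsupp.equivFunOnFinite.symm N)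
        ((∑ e, MvPolynomial.C (w e) * MvPolynomial.X (a e) * MvPolynomial.X (b e)) ^ k)
      = (Nat.factorial k : ℝ) *
          ∑' M : {M : E → ℕ //
              ∀ v, ∑ e ∈ Finset.univ.filter (fun e => a e = v ∨ b e = v), M e = N v},
            ∏ e, w e ^ M.1 e / (Nat.factorial (M.1 e) : ℝ) := by
  classical
  have hterm : ∀ e, (MvPolynomial.C (w e) * MvPolynomial.X (a e) * MvPolynomial.X (b e) :
      MvPolynomial V ℝ)
      = MvPolynomial.monomial (Finsupp.single (a e) 1 + Finsupp.single (b e) 1) (w e) := by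
    intro e
    rw [MvPolynomial.X, MvPolynomial.X, MvPolynomial.C_mul_monomial, MvPolynomial.monomial_mul]
    simp
  have hdeg : ∀ (M : E → ℕ) (v : V),
      (∑ e, M e • (Finsupp.single (a e) 1 + Finsupp.single (b e) 1 : V →₀ ℕ)) v
        = ∑ e ∈ Finset.univ.filter (fun e => a e = v ∨ b e = v), M e := by
    intro M v
    rw [Finsupp.finset_sum_apply, Finset.sum_filter]
    refine Finset.sum_congr rfl fun e _ => ?_
    have := hab e
    simp only [Finsupp.smul_apply, Finsupp.add_apply, Finsupp.single_apply, smul_eq_mul]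
    by_cases h1 : a e = v
    · have h2 : b e ≠ v := fun h => this (h1.trans h.symm)
      simp [h1, h2]
    · simp [h1]
  have hiff : ∀ M : E → ℕ,
      (∑ e, M e • (Finsupp.single (a e) 1 + Finsupp.single (b e) 1 : V →₀ ℕ))
        = Finsupp.equivFunOnFinite.symm N ↔
      ∀ v, ∑ e ∈ Finset.univ.filter (fun e => a e = v ∨ b e = v), M e = N v := by
    intro M
    rw [Finsupp.ext_iff]
    refine forall_congr' fun v => ?_
    rw [hdeg]
    simp
  have hsum : ∀ M : E → ℕ,
      (∀ v, ∑ e ∈ Finset.univ.filter (fun e => a e = v ∨ b e = v), M e = N v) →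
      ∑ e, M e = k := by
    intro M hM
    have h2 : ∑ v, N v = 2 * ∑ e, M e := by
      have h3 : ∀ v, N v = ∑ e, ((if a e = v then M e else 0) + if b e = v then M e else 0) := by
        intro v
        rw [← hM v, Finset.sum_filter]
        refine Finset.sum_congr rfl fun e _ => ?_
        have := hab e
        by_cases h1 : a e = v
        · have h2 : b e ≠ v := fun h => this (h1.trans h.symm)
          simp [h1, h2]
        · simp [h1]
      rw [Finset.sum_congr rfl fun v _ => h3 v, Finset.sum_comm, Finset.mul_sum]
      refine Finset.sum_congr rfl fun e _ => ?_
      rw [Finset.sum_add_distrib]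
      simp [two_mul]
    omega
  have htsum : ∑' M : {M : E → ℕ //
              ∀ v, ∑ e ∈ Finset.univ.filter (fun e => a e = v ∨ b e = v), M e = N v},
            ∏ e, w e ^ M.1 e / (Nat.factorial (M.1 e) : ℝ)
      = ∑ M ∈ Finset.piAntidiag (Finset.univ : Finset E) k,
          if (∀ v, ∑ e ∈ Finset.univ.filter (fun e => a e = v ∨ b e = v), M e = N v) then
            ∏ e, w e ^ M e / (Nat.factorial (M e) : ℝ) else 0 := by
    have h1 := tsum_subtype {M : E → ℕ |
        ∀ v, ∑ e ∈ Finset.univ.filter (fun e => a e = v ∨ b e = v), M e = N v}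
      (fun M => ∏ e, w e ^ M e / (Nat.factorial (M e) : ℝ))
    refine h1.trans ?_
    rw [tsum_eq_sum (s := Finset.piAntidiag (Finset.univ : Finset E) k)]
    · refine Finset.sum_congr rfl fun M _ => ?_
      simp only [Set.indicator_apply, Set.mem_setOf_eq]
    · intro M hM
      refine Set.indicator_of_notMem (fun h => hM ?_) _
      simpa using hsum M h
  rw [htsum, Finset.sum_congr rfl fun e _ => hterm e, Finset.sum_pow_eq_sum_piAntidiag,
    MvPolynomial.coeff_sum, Finset.mul_sum]
  refine Finset.sum_congr rfl fun M hM => ?_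
  have hk : ∑ e, M e = k := by simpa using hM
  simp only [MvPolynomial.monomial_pow]
  rw [prod_monomial_aux, ← MvPolynomial.C_eq_coe_nat, MvPolynomial.coeff_C_mul,
    MvPolynomial.coeff_monomial]
  simp only [hiff]
  split_ifs with h
  · have hs := Nat.multinomial_spec Finset.univ M
    rw [hk] at hs
    have hp : (∏ e, (Nat.factorial (M e) : ℝ)) ≠ 0 :=
      Finset.prod_ne_zero_iff.2 fun e _ => by positivity
    rw [← hs, Finset.prod_div_distrib]
    push_cast
    field_simp
  · simp
end

section
/- Hall's matching theorem for N-dimer covers: there exists a function M : W × B → ℕ with M(u,v) = 0 whenever u and v are not adjacent, Σ_{v ∈ B} M(u,v) = N(u) for every u ∈ W, and Σ_{u ∈ W} M(u,v) = N(v) for every v ∈ B, if and only if for every subset C ⊆ W one has Σ_{u ∈ C} N(u) ≤ Σ_{v ∈ Nbr(C)} N(v), where Nbr(C) = {v ∈ B : some u ∈ C is adjacent to v}. -/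
open Classical

theorem card_sigma_fin_filter {V : Type*} [Fintype V] (n : V → ℕ) (p : V → Prop)
    [DecidablePred p] [DecidablePred (fun a : (Σ v, Fin (n v)) => p a.1)] :
    (Finset.univ.filter (fun a : (Σ v, Fin (n v)) => p a.1)).card
      = ∑ v ∈ Finset.univ.filter p, n v := by
  have : Finset.univ.filter (fun a : (Σ v, Fin (n v)) => p a.1)
      = (Finset.univ.filter p).sigma (fun _ => Finset.univ) := by
    ext a; simp
  rw [this, Finset.card_sigma]; simp

theorem card_sigma_fin_eq {V : Type*} [Fintype V] (n : V → ℕ) (w : V)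
    [DecidablePred (fun a : (Σ v, Fin (n v)) => a.1 = w)] :
    (Finset.univ.filter (fun a : (Σ v, Fin (n v)) => a.1 = w)).card = n w := by
  rw [card_sigma_fin_filter n (fun x => x = w)]
  have : Finset.univ.filter (fun x => x = w) = {w} := by ext; simp
  rw [this]; simp

/-- Hall's matching theorem for `N`-dimer covers of a finite bipartite graph with white
vertices `W`, black vertices `B`, adjacency `r`, and vertex multiplicities `N` with equal
total white and black multiplicity: an `N`-dimer cover (a multiplicity function on edges
summing to `N` at each vertex) exists iff for every `C ⊆ W` the total multiplicity of `C`
is at most the total multiplicity of its neighborhood. -/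
theorem hall_matching_dimer_covers
    {W B : Type*} [Fintype W] [Fintype B]
    (r : W → B → Prop) (N : W ⊕ B → ℕ)
    (hbal : ∑ u : W, N (Sum.inl u) = ∑ v : B, N (Sum.inr v)) :
    (∃ M : W → B → ℕ,
        (∀ u v, ¬ r u v → M u v = 0) ∧
        (∀ u, ∑ v, M u v = N (Sum.inl u)) ∧
        (∀ v, ∑ u, M u v = N (Sum.inr v))) ↔
      ∀ C : Finset W,
        ∑ u ∈ C, N (Sum.inl u) ≤
          ∑ v ∈ Finset.univ.filter (fun v => ∃ u ∈ C, r u v), N (Sum.inr v) := by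
  constructor
  · rintro ⟨M, h0, hW, hB⟩ C
    calc ∑ u ∈ C, N (Sum.inl u) = ∑ u ∈ C, ∑ v, M u v := by simp [hW]
      _ = ∑ u ∈ C, ∑ v ∈ Finset.univ.filter (fun v => ∃ u ∈ C, r u v), M u v := by
          refine Finset.sum_congr rfl fun u hu => ?_
          symm
          refine Finset.sum_subset (Finset.subset_univ _) fun v _ hv => h0 u v fun h => hv ?_
          simpa using ⟨u, hu, h⟩
      _ = ∑ v ∈ Finset.univ.filter (fun v => ∃ u ∈ C, r u v), ∑ u ∈ C, M u v :=
          Finset.sum_comm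
      _ ≤ _ := by
          refine Finset.sum_le_sum fun v _ => ?_
          rw [← hB v]
          exact Finset.sum_le_sum_of_subset (Finset.subset_univ _)
  · intro H
    obtain ⟨f, hf, hr⟩ := (Fintype.all_card_le_filter_rel_iff_exists_injective
      (α := Σ u, Fin (N (Sum.inl u))) (β := Σ v, Fin (N (Sum.inr v)))
      (fun a b => r a.1 b.1)).1 (by
        intro A
        have h1 : A.card ≤ ∑ u ∈ A.image Sigma.fst, N (Sum.inl u) := by
          have h2 := card_sigma_fin_filter (fun u => N (Sum.inl u)) (fun u => u ∈ A.image Sigma.fst)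
          rw [Finset.filter_univ_mem] at h2
          rw [← h2]
          refine Finset.card_le_card fun a ha => ?_
          simp only [Finset.mem_filter, Finset.mem_univ, true_and]
          exact Finset.mem_image_of_mem _ ha
        refine h1.trans ((H _).trans ?_)
        rw [← card_sigma_fin_filter (fun v => N (Sum.inr v))]
        refine Finset.card_le_card fun b hb => ?_
        simp only [Finset.mem_filter, Finset.mem_univ, true_and, Finset.mem_image] at hb ⊢
        obtain ⟨u, ⟨a, ha, rfl⟩, hu⟩ := hb
        exact ⟨a, ha, hu⟩)
    have hbij : Function.Bijective f :=
      (Fintype.bijective_iff_injective_and_card f).2 ⟨hf, by simpa using hbal⟩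
    refine ⟨fun u v => (Finset.univ.filter (fun a => a.1 = u ∧ (f a).1 = v)).card, ?_, ?_, ?_⟩
    · intro u v huv
      rw [Finset.card_eq_zero, Finset.filter_eq_empty_iff]
      rintro a _ ⟨rfl, rfl⟩
      exact huv (hr a)
    · intro u
      have h2 := card_sigma_fin_eq (fun u => N (Sum.inl u)) u
      rw [Finset.card_eq_sum_card_fiberwise (f := fun a => (f a).1) (t := Finset.univ)
        (fun _ _ => by simp)] at h2
      simpa [Finset.filter_filter] using h2
    · intro v
      have h2 := card_sigma_fin_eq (fun v => N (Sum.inr v)) v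
      have h3 : (Finset.univ.filter (fun a => (f a).1 = v)).card
          = (Finset.univ.filter (fun b : (Σ v, Fin (N (Sum.inr v))) => b.1 = v)).card := by
        refine Finset.card_bijective f hbij fun a => ?_
        simp
      rw [← h3, Finset.card_eq_sum_card_fiberwise (f := fun a => a.1) (t := Finset.univ)
        (fun _ _ => by simp)] at h2
      simpa [Finset.filter_filter, and_comm] using h2
end

section
/- A positive edge weight function w on a finite bipartite graph G is gauge equivalent to the uniform weight function (i.e. there exists x : V → ℝ_{>0} with w(e)·x(u)·x(v) = 1 for every edge e = (u,v)) if and only if for every cycle of G with edges e_1, e_2, …, e_{2k} in cyclic order, the alternating products agree: w(e_1)·w(e_3)⋯w(e_{2k−1}) = w(e_2)·w(e_4)⋯w(e_{2k}). -/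
/-- Alternating products of a weight function along a list of edges: the first component
is the product of the weights at odd positions (1st, 3rd, …) and the second component is
the product of the weights at even positions (2nd, 4th, …). -/
def altProd {V : Type*} (w : Sym2 V → ℝ) : List (Sym2 V) → ℝ × ℝ
  | [] => (1, 1)
  | e :: l => (w e * (altProd w l).2, (altProd w l).1)

open SimpleGraph in
/-- signed log sum along a walk -/
noncomputable def gsum {V : Type*} {G : SimpleGraph V} (s : V → ℝ) (w : Sym2 V → ℝ) :
    {u v : V} → G.Walk u v → ℝ
  | _, _, .nil => 0
  | u, _, .cons (v := v) _ p => s u * Real.log (w s(u, v)) + gsum s w p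

theorem gsum_append {V : Type*} {G : SimpleGraph V} (s : V → ℝ) (w : Sym2 V → ℝ)
    {u v z : V} (p : G.Walk u v) (q : G.Walk v z) :
    gsum s w (p.append q) = gsum s w p + gsum s w q := by
  induction p with
  | nil => simp [gsum]
  | cons h p ih => simp [gsum, ih, add_assoc]

theorem altProd_pos {V : Type*} {G : SimpleGraph V} (w : Sym2 V → ℝ)
    (hw : ∀ e ∈ G.edgeSet, 0 < w e) {u v : V} (p : G.Walk u v) :
    0 < (altProd w p.edges).1 ∧ 0 < (altProd w p.edges).2 := by
  induction p with
  | nil => simp [altProd]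
  | cons h p ih =>
    simp only [SimpleGraph.Walk.edges_cons, altProd]
    exact ⟨mul_pos (hw _ h) ih.2, ih.1⟩

theorem gsum_eq {V : Type*} {G : SimpleGraph V} (s : V → ℝ) (w : Sym2 V → ℝ)
    (hw : ∀ e ∈ G.edgeSet, 0 < w e) (hs : ∀ u v, G.Adj u v → s v = - s u)
    {u v : V} (p : G.Walk u v) :
    gsum s w p = s u * (Real.log (altProd w p.edges).1 - Real.log (altProd w p.edges).2) := by
  induction p with
  | nil => simp [altProd, gsum]
  | cons h p ih =>
    have hp := altProd_pos w hw p
    simp only [SimpleGraph.Walk.edges_cons, altProd, gsum]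
    rw [ih, Real.log_mul (hw _ h).ne' hp.2.ne', hs _ _ h]
    ring

theorem gsum_path {V : Type*} {G : SimpleGraph V} (s : V → ℝ) (w : Sym2 V → ℝ)
    {u v : V} (p : G.Walk v u) (hp : p.IsPath) (he : s(u, v) ∈ p.edges) :
    gsum s w p = s v * Real.log (w s(v, u)) := by
  cases p with
  | nil => simp at he
  | @cons _ x _ h q =>
    rw [SimpleGraph.Walk.cons_isPath_iff] at hp
    rw [SimpleGraph.Walk.edges_cons, List.mem_cons] at he
    rcases he with he | he
    · have hx : u = x := by
        have := h.ne
        simp only [Sym2.eq_iff] at he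
        grind
      subst hx
      have : q = .nil := (SimpleGraph.Walk.isPath_iff_nil.1 hp.1).eq_nil
      subst this
      simp [gsum]
    · exact absurd (q.snd_mem_support_of_mem_edges he) hp.2

theorem gsum_bypass {V : Type*} [DecidableEq V] {G : SimpleGraph V} (s : V → ℝ) (w : Sym2 V → ℝ)
    (hs : ∀ u v, G.Adj u v → s v = - s u)
    (hc : ∀ (v : V) (c : G.Walk v v), c.IsCycle → gsum s w c = 0)
    {u v : V} (p : G.Walk u v) : gsum s w p = gsum s w p.bypass := by
  induction p with
  | nil => simp [SimpleGraph.Walk.bypass]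
  | @cons a b c h p ih =>
    have hP := p.bypass_isPath
    simp only [SimpleGraph.Walk.bypass]
    split_ifs with hm
    · have e1 : gsum s w p.bypass = gsum s w (p.bypass.takeUntil a hm)
          + gsum s w (p.bypass.dropUntil a hm) := by
        rw [← gsum_append, SimpleGraph.Walk.take_spec]
      have hT := hP.takeUntil hm
      have e2 : s a * Real.log (w s(a, b)) + gsum s w (p.bypass.takeUntil a hm) = 0 := by
        by_cases he : s(a, b) ∈ (p.bypass.takeUntil a hm).edges
        · rw [gsum_path s w _ hT he, hs _ _ h, Sym2.eq_swap]
          ring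
        · exact hc a (.cons h (p.bypass.takeUntil a hm))
            ((SimpleGraph.Walk.cons_isCycle_iff _ h).2 ⟨hT, he⟩)
      simp only [gsum]
      rw [ih]
      linarith
    · simp [gsum, ih]

/-- A positive edge weight function `w` on a finite bipartite simple graph is gauge
equivalent to the uniform weight function (there is `x : V → ℝ_{>0}` with
`w(e)·x(u)·x(v) = 1` for every edge `e = (u,v)`) iff for every cycle with edges
`e_1, …, e_{2k}` in cyclic order the alternating products agree:
`w(e_1)·w(e_3)⋯w(e_{2k−1}) = w(e_2)·w(e_4)⋯w(e_{2k})`. -/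
theorem gauge_equivalent_uniform_iff_alternating_products
    {V : Type*} [Fintype V] [DecidableEq V]
    (G : SimpleGraph V) (hbip : G.Colorable 2)
    (w : Sym2 V → ℝ) (hw : ∀ e ∈ G.edgeSet, 0 < w e) :
    (∃ x : V → ℝ, (∀ v, 0 < x v) ∧
        ∀ u v, G.Adj u v → w s(u, v) * x u * x v = 1) ↔
      ∀ (v : V) (c : G.Walk v v), c.IsCycle →
        (altProd w c.edges).1 = (altProd w c.edges).2 := by
  obtain ⟨C⟩ := hbip
  obtain ⟨s, hs, hs2⟩ : ∃ s : V → ℝ, (∀ u v, G.Adj u v → s v = - s u) ∧ ∀ v, s v * s v = 1 := by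
    refine ⟨fun v => if C v = 0 then 1 else -1, fun u v h => ?_, fun v => ?_⟩
    · have := C.valid h
      have h1 : C u = 0 ∨ C u = 1 := by omega
      have h2 : C v = 0 ∨ C v = 1 := by omega
      rcases h1 with h1 | h1 <;> rcases h2 with h2 | h2 <;> simp_all
    · dsimp only
      split_ifs <;> norm_num
  constructor
  · rintro ⟨x, hx, hxw⟩ v c -
    have key : ∀ {a b : V} (p : G.Walk a b),
        gsum s w p = s b * Real.log (x b) - s a * Real.log (x a) := by
      intro a b p
      induction p with
      | nil => simp [gsum]
      | @cons a b c h p ih =>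
        have h1 := congrArg Real.log (hxw _ _ h)
        rw [Real.log_mul (mul_pos (hw _ h) (hx _)).ne' (hx _).ne',
          Real.log_mul (hw _ h).ne' (hx _).ne', Real.log_one] at h1
        simp only [gsum]
        rw [ih, hs _ _ h]
        linear_combination s a * h1
    have h1 := gsum_eq s w hw hs c
    rw [key c, sub_self] at h1
    have hp := altProd_pos w hw c
    have hsv : s v ≠ 0 := fun h => by simpa [h] using hs2 v
    have h2 := (mul_eq_zero.1 h1.symm).resolve_left hsv
    exact Real.log_injOn_pos hp.1 hp.2 (sub_eq_zero.1 h2)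
  · intro hc
    have hc' : ∀ (v : V) (c : G.Walk v v), c.IsCycle → gsum s w c = 0 := by
      intro v c h
      rw [gsum_eq s w hw hs c, hc v c h]
      ring
    have h0 : ∀ (v : V) (c : G.Walk v v), gsum s w c = 0 := by
      intro v c
      rw [gsum_bypass s w hs hc' c, (SimpleGraph.Walk.isPath_iff_nil.1 c.bypass_isPath).eq_nil]
      simp [gsum]
    let r : V → V := fun v => (G.connectedComponentMk v).out
    have hr : ∀ v, G.Reachable (r v) v := fun v =>
      SimpleGraph.ConnectedComponent.exact (Quot.out_eq _)
    have hrr : ∀ u v, G.Adj u v → r u = r v := fun u v h => by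
      simp only [r, SimpleGraph.ConnectedComponent.sound h.reachable]
    let P : ∀ v, G.Walk (r v) v := fun v => (hr v).some
    have hrev : ∀ {a b : V} (p q : G.Walk a b), gsum s w p = gsum s w q := by
      intro a b p q
      have h1 := h0 _ (p.append q.reverse)
      have h2 := h0 _ (q.append q.reverse)
      rw [gsum_append] at h1 h2
      linarith
    have hstep : ∀ u v, G.Adj u v →
        gsum s w (P v) = gsum s w (P u) + s u * Real.log (w s(u, v)) := by
      intro u v h
      have gen : ∀ (a b : V) (p : G.Walk a u) (q : G.Walk b v), a = b →
          gsum s w q = gsum s w p + s u * Real.log (w s(u, v)) := by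
        rintro a b p q rfl
        rw [hrev q (p.append (.cons h .nil)), gsum_append]
        simp [gsum]
      exact gen _ _ _ _ (hrr u v h)
    refine ⟨fun v => Real.exp (s v * gsum s w (P v)), fun v => Real.exp_pos _, fun u v h => ?_⟩
    dsimp only
    rw [← Real.exp_log (hw s(u, v) h), ← Real.exp_add, ← Real.exp_add, Real.exp_eq_one_iff,
      hstep u v h, hs u v h]
    linear_combination (-Real.log (w s(u, v))) * hs2 u
end

section
/- No facets (variational core of the no-facets theorem): let R ⊂ ℝ^d be a compact set, and let ω, ω_0 : R → ℝ^d be Lebesgue-measurable maps taking values in the Newton polytope N, such that ω_0(x) lies in the interior of N for almost every x ∈ R. If the set A := {x ∈ R : ω(x) ∈ frontier(N)} has positive Lebesgue measure, then there exists ε ∈ (0,1) such that ∫_R σ((1−ε)·ω(x) + ε·ω_0(x)) dx < ∫_R σ(ω(x)) dx. -/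
open MeasureTheory

section helpers

lemma nf_bound {d D : ℕ} (e : Fin D → (Fin d → ℝ)) {s : Fin d → ℝ}
    (hs : s ∈ convexHull ℝ (Set.range e)) :
    ∃ q : Fin D → ℝ, (∀ j, 0 ≤ q j) ∧ ∑ j, q j = 1 ∧ ∀ α : Fin d → ℝ,
      ∑ i, s i * α i = ∑ j, q j * ∑ i, e j i * α i := by
  rw [convexHull_range_eq_exists_affineCombination] at hs
  obtain ⟨t, w, h0, h1, rfl⟩ := hs
  classical
  rw [Finset.affineCombination_eq_linear_combination _ _ _ h1]
  refine ⟨fun j => if j ∈ t then w j else 0, ?_, ?_, ?_⟩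
  · intro j
    dsimp only
    split_ifs with h
    · exact h0 j h
    · exact le_rfl
  · simpa using h1
  · intro α
    simp only [ite_mul, zero_mul, Finset.sum_ite_mem, Finset.univ_inter]
    simp only [Finset.sum_apply, Pi.smul_apply, smul_eq_mul, Finset.sum_mul, Finset.mul_sum]
    rw [Finset.sum_comm]
    simp only [mul_assoc]

lemma nf_le_F {d D : ℕ} (e : Fin D → (Fin d → ℝ)) (α : Fin d → ℝ) (j : Fin D) :
    ∑ i, e j i * α i ≤ freeEnergy d D e α := by
  unfold freeEnergy
  have h : Real.exp (∑ i, e j i * α i) ≤ ∑ j, Real.exp (∑ i, e j i * α i) :=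
    Finset.single_le_sum (f := fun j => Real.exp (∑ i, e j i * α i))
      (fun _ _ => (Real.exp_pos _).le) (Finset.mem_univ j)
  rw [Real.le_log_iff_exp_le (lt_of_lt_of_le (Real.exp_pos _) h)]
  exact h

lemma nf_nonpos {d D : ℕ} (e : Fin D → (Fin d → ℝ)) {s : Fin d → ℝ}
    (hs : s ∈ convexHull ℝ (Set.range e)) (α : Fin d → ℝ) :
    (∑ i, s i * α i) - freeEnergy d D e α ≤ 0 := by
  obtain ⟨q, h0, h1, h2⟩ := nf_bound e hs
  rw [h2 α, sub_nonpos]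
  calc ∑ j, q j * ∑ i, e j i * α i ≤ ∑ j, q j * freeEnergy d D e α :=
        Finset.sum_le_sum fun j _ => mul_le_mul_of_nonneg_left (nf_le_F e α j) (h0 j)
    _ = freeEnergy d D e α := by rw [← Finset.sum_mul, h1, one_mul]

lemma nf_le_sigma {d D : ℕ} (e : Fin D → (Fin d → ℝ)) {s : Fin d → ℝ}
    (hs : s ∈ convexHull ℝ (Set.range e)) (α : Fin d → ℝ) :
    (∑ i, s i * α i) - freeEnergy d D e α ≤ surfTension d D e s :=
  le_csSup ⟨0, by rintro _ ⟨α, rfl⟩; exact nf_nonpos e hs α⟩ ⟨α, rfl⟩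

lemma nf_sigma_le {d D : ℕ} (e : Fin D → (Fin d → ℝ)) {s : Fin d → ℝ} {c : ℝ}
    (h : ∀ α : Fin d → ℝ, (∑ i, s i * α i) - freeEnergy d D e α ≤ c) :
    surfTension d D e s ≤ c :=
  csSup_le (Set.range_nonempty _) (by rintro _ ⟨α, rfl⟩; exact h α)

lemma nf_sigma_nonpos {d D : ℕ} (e : Fin D → (Fin d → ℝ)) {s : Fin d → ℝ}
    (hs : s ∈ convexHull ℝ (Set.range e)) : surfTension d D e s ≤ 0 :=
  nf_sigma_le e (nf_nonpos e hs)

lemma nf_sigma_ge {d D : ℕ} (e : Fin D → (Fin d → ℝ)) {s : Fin d → ℝ}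
    (hs : s ∈ convexHull ℝ (Set.range e)) : - Real.log D ≤ surfTension d D e s := by
  have := nf_le_sigma e hs 0
  simpa [freeEnergy] using this

lemma nf_dot {d : ℕ} (ε : ℝ) (s t α : Fin d → ℝ) :
    ∑ i, ((1 - ε) • s + ε • t) i * α i = (1 - ε) * ∑ i, s i * α i + ε * ∑ i, t i * α i := by
  simp only [Finset.mul_sum, ← Finset.sum_add_distrib, Pi.add_apply, Pi.smul_apply, smul_eq_mul]
  exact Finset.sum_congr rfl fun i _ => by ring

lemma nf_convex {d D : ℕ} (e : Fin D → (Fin d → ℝ)) {s t : Fin d → ℝ}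
    (hs : s ∈ convexHull ℝ (Set.range e)) (ht : t ∈ convexHull ℝ (Set.range e))
    {ε : ℝ} (h0 : 0 < ε) (h1 : ε < 1) :
    surfTension d D e ((1 - ε) • s + ε • t) ≤ (1 - ε) * surfTension d D e s := by
  apply nf_sigma_le
  intro α
  rw [nf_dot]
  have a := mul_le_mul_of_nonneg_left (nf_le_sigma e hs α) (sub_nonneg.2 h1.le)
  have b := mul_le_mul_of_nonneg_left (nf_nonpos e ht α) h0.le
  linarith

lemma nf_F_cont {d D : ℕ} (hD : 1 ≤ D) (e : Fin D → (Fin d → ℝ)) :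
    Continuous (freeEnergy d D e) := by
  unfold freeEnergy
  refine Continuous.log (by fun_prop) ?_
  intro α
  have : Nonempty (Fin D) := ⟨⟨0, hD⟩⟩
  exact (Finset.sum_pos (fun j _ => Real.exp_pos _) Finset.univ_nonempty).ne'

lemma nf_meas {d D : ℕ} (hD : 1 ≤ D) (e : Fin D → (Fin d → ℝ)) :
    Measurable (surfTension d D e) := by
  have key : surfTension d D e = fun s => ⨆ n : ℕ,
      ((∑ i, s i * (TopologicalSpace.denseSeq (Fin d → ℝ) n) i)
        - freeEnergy d D e (TopologicalSpace.denseSeq (Fin d → ℝ) n)) := by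
    funext s
    have hc : Continuous fun α : Fin d → ℝ => (∑ i, s i * α i) - freeEnergy d D e α :=
      Continuous.sub (by fun_prop) (nf_F_cont hD e)
    have hden := TopologicalSpace.denseRange_denseSeq (Fin d → ℝ)
    set f := fun α : Fin d → ℝ => (∑ i, s i * α i) - freeEnergy d D e α with hf
    have hub : upperBounds (Set.range f)
        = upperBounds (Set.range fun n => f (TopologicalSpace.denseSeq (Fin d → ℝ) n)) := by
      apply Set.Subset.antisymm
      · apply upperBounds_mono_set
        rintro _ ⟨n, rfl⟩
        exact ⟨_, rfl⟩
      · rintro c hc' _ ⟨α, rfl⟩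
        have hcl : IsClosed {α | f α ≤ c} := isClosed_le hc continuous_const
        exact hden.induction_on (p := fun α => f α ≤ c) α hcl (fun n => hc' ⟨n, rfl⟩)
    change sSup (Set.range f) =
      sSup (Set.range fun n => f (TopologicalSpace.denseSeq (Fin d → ℝ) n))
    by_cases hb : BddAbove (Set.range f)
    · have h1 := isLUB_csSup (Set.range_nonempty f) hb
      have h2 := isLUB_csSup (s := Set.range fun n => f (TopologicalSpace.denseSeq (Fin d → ℝ) n))
        (Set.range_nonempty _) (by unfold BddAbove; rw [← hub]; exact hb)
      unfold IsLUB at h1 h2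
      rw [hub] at h1
      exact h1.unique h2
    · rw [Real.sSup_of_not_bddAbove hb, Real.sSup_of_not_bddAbove]
      unfold BddAbove
      rw [← hub]
      exact hb
  rw [key]
  apply Measurable.iSup
  intro n
  fun_prop

lemma nf_log {A B θ : ℝ} (hA : 0 < A) (hB : 0 < B) (h0 : 0 < θ) (h1 : θ < 1) :
    (1 - θ) * Real.log A + θ * Real.log B - θ * Real.log θ ≤ Real.log (A + B) := by
  have h := strictConcaveOn_log_Ioi.concaveOn.2 (x := A) (y := B / θ) hA (div_pos hB h0)
    (sub_pos.2 h1).le h0.le (by ring)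
  simp only [smul_eq_mul] at h
  rw [mul_div_cancel₀ _ h0.ne', Real.log_div hB.ne' h0.ne'] at h
  have h2 : Real.log ((1 - θ) * A + B) ≤ Real.log (A + B) := by
    apply Real.log_le_log
    · have := mul_pos (sub_pos.2 h1) hA
      linarith
    · nlinarith
  linarith

lemma nf_key {d D : ℕ} (e : Fin D → (Fin d → ℝ)) {s t : Fin d → ℝ}
    (hs : s ∈ convexHull ℝ (Set.range e)) (hs' : s ∈ frontier (convexHull ℝ (Set.range e)))
    (ht : t ∈ interior (convexHull ℝ (Set.range e))) :
    ∃ m : ℝ, 0 < m ∧ m ≤ 1 ∧ ∀ ε : ℝ, 0 < ε → ε < 1 →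
      surfTension d D e ((1 - ε) • s + ε • t) ≤
        (1 - ε) * surfTension d D e s + (ε * m) * Real.log (ε * m) := by
  classical
  have hconv : Convex ℝ (convexHull ℝ (Set.range e)) := convex_convexHull ℝ _
  obtain ⟨f, hf⟩ := geometric_hahn_banach_open_point hconv.interior isOpen_interior hs'.2
  have hfle : ∀ a ∈ convexHull ℝ (Set.range e), f a ≤ f s := by
    intro a ha
    have h1 : a ∈ closure (interior (convexHull ℝ (Set.range e))) := by
      rw [hconv.closure_interior_eq_closure_of_nonempty_interior ⟨t, ht⟩]
      exact subset_closure ha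
    exact closure_minimal (fun b hb => (hf b hb).le)
      (isClosed_le f.continuous continuous_const) h1
  obtain ⟨n, hn⟩ : ∃ n : Fin d → ℝ, ∀ x, f x = ∑ i, x i * n i := by
    refine ⟨fun i => f (Pi.single i 1), fun x => ?_⟩
    conv_lhs => rw [pi_eq_sum_univ' x]
    simp [map_sum, map_smul, Pi.single]
  have hej : ∀ j, f (e j) ≤ f s := fun j => hfle _ (subset_convexHull ℝ _ ⟨j, rfl⟩)
  set J : Finset (Fin D) := Finset.univ.filter fun j => f (e j) = f s with hJ
  obtain ⟨p, hp0, hp1, hp⟩ := nf_bound e hs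
  obtain ⟨q, hq0, hq1, hq⟩ := nf_bound e (interior_subset ht)
  have hps : f s = ∑ j, p j * f (e j) := by simp only [hn]; exact hp n
  have hqt : f t = ∑ j, q j * f (e j) := by simp only [hn]; exact hq n
  have hft : f t < f s := hf t ht
  have hJne : J.Nonempty := by
    by_contra hne
    rw [Finset.not_nonempty_iff_eq_empty] at hne
    have hlt : ∀ j, f (e j) < f s := fun j => lt_of_le_of_ne (hej j) fun h => by
      have : j ∈ J := by simp [hJ, h]
      simp [hne] at this
    have h0 : ∑ j, p j * (f s - f (e j)) = 0 := by
      simp only [mul_sub, Finset.sum_sub_distrib, ← Finset.sum_mul, hp1]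
      linarith
    rw [Finset.sum_eq_zero_iff_of_nonneg
      (fun j _ => mul_nonneg (hp0 j) (sub_nonneg.2 (hej j)))] at h0
    have : ∀ j, p j = 0 := fun j => by
      rcases mul_eq_zero.1 (h0 j (Finset.mem_univ j)) with h | h
      · exact h
      · linarith [hlt j]
    simp [this] at hp1
  have hsplit : ∑ j ∈ J, q j + ∑ j ∈ Jᶜ, q j = 1 := by rw [Finset.sum_add_sum_compl, hq1]
  have hmpos : 0 < ∑ j ∈ Jᶜ, q j := by
    refine lt_of_le_of_ne (Finset.sum_nonneg fun j _ => hq0 j) fun h => ?_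
    have h0 := (Finset.sum_eq_zero_iff_of_nonneg (fun j _ => hq0 j)).1 h.symm
    have : ∑ j, q j * f (e j) = ∑ j, q j * f s := by
      refine Finset.sum_congr rfl fun j _ => ?_
      by_cases hj : j ∈ J
      · rw [(Finset.mem_filter.1 hj).2]
      · rw [h0 j (Finset.mem_compl.2 hj)]; simp
    rw [← Finset.sum_mul, hq1, one_mul] at this
    linarith
  have hJcne : (Jᶜ).Nonempty := by
    by_contra hne
    rw [Finset.not_nonempty_iff_eq_empty] at hne
    rw [hne] at hmpos
    simp at hmpos
  have hJq : 0 ≤ ∑ j ∈ J, q j := Finset.sum_nonneg fun j _ => hq0 j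
  set m := ∑ j ∈ Jᶜ, q j with hm
  refine ⟨m, hmpos, by linarith, ?_⟩
  intro ε h0 h1
  apply nf_sigma_le
  intro α
  set ZJ := ∑ j ∈ J, Real.exp (∑ i, e j i * α i) with hZJ
  set ZC := ∑ j ∈ Jᶜ, Real.exp (∑ i, e j i * α i) with hZC
  have hZJpos : 0 < ZJ := Finset.sum_pos (fun _ _ => Real.exp_pos _) hJne
  have hZCpos : 0 < ZC := Finset.sum_pos (fun _ _ => Real.exp_pos _) hJcne
  have hF : freeEnergy d D e α = Real.log (ZJ + ZC) := by
    unfold freeEnergy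
    rw [hZJ, hZC, Finset.sum_add_sum_compl]
  -- the limit step
  have hlim : (∑ i, s i * α i) - Real.log ZJ ≤ surfTension d D e s := by
    have hT : Filter.Tendsto (fun l : ℝ => (∑ i, s i * α i) - Real.log
        (∑ j, Real.exp (∑ i, e j i * α i) * Real.exp (-(l * (f s - f (e j))))))
        Filter.atTop (nhds ((∑ i, s i * α i) - Real.log ZJ)) := by
      refine Filter.Tendsto.sub tendsto_const_nhds (Filter.Tendsto.log ?_ hZJpos.ne')
      have : ZJ = ∑ j, Real.exp (∑ i, e j i * α i) * (if j ∈ J then 1 else 0) := by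
        simp [hZJ]
      rw [this]
      refine tendsto_finsetSum _ fun j _ => Filter.Tendsto.const_mul _ ?_
      by_cases hj : j ∈ J
      · have := (Finset.mem_filter.1 hj).2
        simp [hj, this]
      · have hlt : 0 < f s - f (e j) := by
          refine sub_pos.2 (lt_of_le_of_ne (hej j) fun h => hj ?_)
          simp [hJ, h]
        simp only [hj, if_false]
        exact Real.tendsto_exp_neg_atTop_nhds_zero.comp
          (Filter.tendsto_id.atTop_mul_const hlt)
    refine le_of_tendsto hT (Filter.Eventually.of_forall fun l => ?_)
    refine le_trans (le_of_eq ?_) (nf_le_sigma e hs (α + l • n))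
    have hdot : ∀ x : Fin d → ℝ, ∑ i, x i * (α + l • n) i = ∑ i, x i * α i + l * f x := by
      intro x
      rw [hn, Finset.mul_sum, ← Finset.sum_add_distrib]
      refine Finset.sum_congr rfl fun i _ => ?_
      simp only [Pi.add_apply, Pi.smul_apply, smul_eq_mul]
      ring
    unfold freeEnergy
    simp only [hdot]
    have : ∑ j, Real.exp (∑ i, e j i * α i + l * f (e j)) = Real.exp (l * f s) *
        ∑ j, Real.exp (∑ i, e j i * α i) * Real.exp (-(l * (f s - f (e j)))) := by
      rw [Finset.mul_sum]
      refine Finset.sum_congr rfl fun j _ => ?_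
      rw [← Real.exp_add, ← Real.exp_add]
      congr 1
      ring
    rw [this, Real.log_mul (Real.exp_pos _).ne', Real.log_exp]
    · ring
    · obtain ⟨j, -⟩ := hJne
      exact (Finset.sum_pos (fun _ _ => by positivity) ⟨j, Finset.mem_univ j⟩).ne'
  have hle : ∀ (K : Finset (Fin D)), ∀ j ∈ K,
      ∑ i, e j i * α i ≤ Real.log (∑ j ∈ K, Real.exp (∑ i, e j i * α i)) := by
    intro K j hj
    have h : Real.exp (∑ i, e j i * α i) ≤ ∑ j ∈ K, Real.exp (∑ i, e j i * α i) :=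
      Finset.single_le_sum (f := fun j => Real.exp (∑ i, e j i * α i))
        (fun _ _ => (Real.exp_pos _).le) hj
    rw [Real.le_log_iff_exp_le (lt_of_lt_of_le (Real.exp_pos _) h)]
    exact h
  have htle : ∑ i, t i * α i ≤ (1 - m) * Real.log ZJ + m * Real.log ZC := by
    rw [hq α, ← Finset.sum_add_sum_compl J, show 1 - m = ∑ j ∈ J, q j by linarith, hm,
      Finset.sum_mul, Finset.sum_mul]
    exact add_le_add
      (Finset.sum_le_sum fun j hj => mul_le_mul_of_nonneg_left (hle J j hj) (hq0 j))
      (Finset.sum_le_sum fun j hj => mul_le_mul_of_nonneg_left (hle Jᶜ j hj) (hq0 j))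
  have hl := nf_log hZJpos hZCpos (mul_pos h0 hmpos) (show ε * m < 1 by nlinarith)
  rw [nf_dot, hF]
  have a := mul_le_mul_of_nonneg_left hlim (sub_nonneg.2 h1.le)
  have b := mul_le_mul_of_nonneg_left htle h0.le
  linarith

end helpers

/-- Variational core of the no-facets theorem: let `R ⊂ ℝ^d` be compact and let
`ω, ω₀` be measurable maps valued in the Newton polytope `N`, with `ω₀` valued in the
interior of `N` almost everywhere on `R`. If `{x ∈ R : ω(x) ∈ frontier N}` has positive
Lebesgue measure, then for some `ε ∈ (0,1)` the surface tension integral of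
`(1−ε)ω + εω₀` is strictly smaller than that of `ω`. -/
theorem no_facets_variational_core
    (d D : ℕ) (hd : 1 ≤ d) (hD : 1 ≤ D)
    (e : Fin D → (Fin d → ℝ))
    (hspan : Submodule.span ℝ (Set.range e) = ⊤)
    (hsum : ∑ j, e j = 0)
    (R : Set (Fin d → ℝ)) (hR : IsCompact R)
    (ω ω₀ : (Fin d → ℝ) → (Fin d → ℝ))
    (hω : Measurable ω) (hω₀ : Measurable ω₀)
    (hωN : ∀ x ∈ R, ω x ∈ convexHull ℝ (Set.range e))
    (hω₀N : ∀ x ∈ R, ω₀ x ∈ convexHull ℝ (Set.range e))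
    (hω₀int : ∀ᵐ x ∂(volume.restrict R), ω₀ x ∈ interior (convexHull ℝ (Set.range e)))
    (hA : 0 < volume {x ∈ R | ω x ∈ frontier (convexHull ℝ (Set.range e))}) :
    ∃ ε ∈ Set.Ioo (0 : ℝ) 1,
      ∫ x in R, surfTension d D e ((1 - ε) • ω x + ε • ω₀ x) <
        ∫ x in R, surfTension d D e (ω x) := by
  classical
  set N := convexHull ℝ (Set.range e) with hN
  have hNc : Convex ℝ N := convex_convexHull ℝ _
  have hRm : MeasurableSet R := hR.measurableSet
  have : IsFiniteMeasure (volume.restrict R) :=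
    ⟨by rw [Measure.restrict_apply_univ]; exact hR.measure_lt_top⟩
  have hσm := nf_meas hD e
  have hmix : ∀ ε : ℝ, 0 < ε → ε < 1 → ∀ x ∈ R, (1 - ε) • ω x + ε • ω₀ x ∈ N :=
    fun ε h0 h1 x hx => hNc (hωN x hx) (hω₀N x hx) (sub_nonneg.2 h1.le) h0.le (by ring)
  have hint : ∀ g : (Fin d → ℝ) → (Fin d → ℝ), Measurable g → (∀ x ∈ R, g x ∈ N) →
      Integrable (fun x => surfTension d D e (g x)) (volume.restrict R) := by
    intro g hg hgN
    refine Integrable.of_bound (C := Real.log D) (hσm.comp hg).aestronglyMeasurable ?_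
    filter_upwards [ae_restrict_mem hRm] with x hx
    rw [Real.norm_eq_abs, abs_le]
    exact ⟨nf_sigma_ge e (hgN x hx),
      (nf_sigma_nonpos e (hgN x hx)).trans (Real.log_natCast_nonneg D)⟩
  by_contra hcon
  push Not at hcon
  set u : ℕ → ℝ := fun n => 1 / ((n : ℝ) + 2) with hu
  have hu0 : ∀ n, 0 < u n := fun n => by simp only [hu]; positivity
  have hu1 : ∀ n, u n < 1 := fun n => by
    simp only [hu]
    rw [div_lt_one (by positivity)]
    have : (0 : ℝ) ≤ n := n.cast_nonneg
    linarith
  have hut : Filter.Tendsto u Filter.atTop (nhds 0) := by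
    simp only [hu]
    exact tendsto_const_nhds.div_atTop
      (Filter.tendsto_atTop_add_const_right _ _ tendsto_natCast_atTop_atTop)
  set G : ℕ → (Fin d → ℝ) → ℝ := fun n x =>
    (surfTension d D e (ω x) - surfTension d D e ((1 - u n) • ω x + u n • ω₀ x)) / u n
      + Real.log D with hG
  have hmm : ∀ n, Measurable fun x => (1 - u n) • ω x + u n • ω₀ x := fun n => by fun_prop
  have hGm : ∀ n, Measurable (G n) := fun n =>
    (((hσm.comp hω).sub (hσm.comp (hmm n))).div_const _).add_const _
  have hI1 := hint ω hω hωN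
  have hI2 : ∀ n, Integrable (fun x => surfTension d D e ((1 - u n) • ω x + u n • ω₀ x))
      (volume.restrict R) := fun n => hint _ (hmm n) (hmix _ (hu0 n) (hu1 n))
  have hGi : ∀ n, Integrable (G n) (volume.restrict R) := fun n =>
    ((hI1.sub (hI2 n)).div_const _).add (integrable_const _)
  have hG0 : ∀ n, 0 ≤ᵐ[volume.restrict R] G n := by
    intro n
    filter_upwards [ae_restrict_mem hRm] with x hx
    have h1 := nf_convex e (hωN x hx) (hω₀N x hx) (hu0 n) (hu1 n)
    have h2 := mul_le_mul_of_nonneg_left (nf_sigma_ge e (hωN x hx)) (hu0 n).le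
    have h3 : -Real.log D ≤ (surfTension d D e (ω x)
        - surfTension d D e ((1 - u n) • ω x + u n • ω₀ x)) / u n := by
      rw [le_div_iff₀ (hu0 n)]
      linarith
    simp only [hG, Pi.zero_apply]
    linarith
  have hGle : ∀ n, ∫⁻ x in R, ENNReal.ofReal (G n x) ≤
      ENNReal.ofReal (∫ _x in R, Real.log D) := by
    intro n
    rw [← ofReal_integral_eq_lintegral_ofReal (hGi n) (hG0 n)]
    apply ENNReal.ofReal_le_ofReal
    simp only [hG]
    have hI3 : Integrable (fun x => (surfTension d D e (ω x)
        - surfTension d D e ((1 - u n) • ω x + u n • ω₀ x)) / u n) (volume.restrict R) :=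
      (hI1.sub (hI2 n)).div_const _
    rw [integral_add hI3 (integrable_const _), integral_div,
      integral_sub hI1 (hI2 n)]
    have := hcon (u n) ⟨hu0 n, hu1 n⟩
    have h2 := div_nonpos_of_nonpos_of_nonneg (sub_nonpos.2 this) (hu0 n).le
    linarith
  have hGm' : ∀ n, Measurable fun x => ENNReal.ofReal (G n x) := fun n => (hGm n).ennreal_ofReal
  have hfat : ∫⁻ x in R, Filter.liminf (fun n => ENNReal.ofReal (G n x)) Filter.atTop ≤
      Filter.liminf (fun n => ∫⁻ x in R, ENNReal.ofReal (G n x)) Filter.atTop :=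
    lintegral_liminf_le hGm'
  have hfin : ∫⁻ x in R, Filter.liminf (fun n => ENNReal.ofReal (G n x)) Filter.atTop ≠ ⊤ := by
    refine ne_top_of_le_ne_top (ENNReal.ofReal_ne_top (r := ∫ _x in R, Real.log D)) (hfat.trans ?_)
    exact Filter.liminf_le_of_le (by isBoundedDefault) fun b hb => by
      obtain ⟨n, hn⟩ := hb.exists
      exact hn.trans (hGle n)
  have hae := ae_lt_top (Measurable.liminf hGm') hfin
  have hnull : ∀ᵐ x ∂(volume.restrict R), ω x ∉ frontier N := by
    filter_upwards [hae, hω₀int, ae_restrict_mem hRm] with x hx hx0 hxR hxf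
    obtain ⟨m, hm0, hm1, hm⟩ := nf_key e (hωN x hxR) hxf hx0
    refine hx.ne (Filter.Tendsto.liminf_eq ?_)
    refine ENNReal.tendsto_ofReal_atTop.comp ?_
    have hlow : ∀ n, -(m * Real.log (u n * m)) ≤ G n x := by
      intro n
      have h1 := hm (u n) (hu0 n) (hu1 n)
      have h2 := mul_le_mul_of_nonneg_left (nf_sigma_ge e (hωN x hxR)) (hu0 n).le
      have h3 : -Real.log D - m * Real.log (u n * m) ≤ (surfTension d D e (ω x)
          - surfTension d D e ((1 - u n) • ω x + u n • ω₀ x)) / u n := by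
        rw [le_div_iff₀ (hu0 n)]
        linarith
      simp only [hG]
      linarith
    refine Filter.tendsto_atTop_mono hlow ?_
    refine Filter.tendsto_neg_atBot_atTop.comp ?_
    refine Filter.Tendsto.const_mul_atBot hm0 ?_
    refine Real.tendsto_log_nhdsGT_zero.comp ?_
    refine tendsto_nhdsWithin_iff.2 ⟨by simpa using hut.mul_const m, ?_⟩
    exact Filter.Eventually.of_forall fun n => mul_pos (hu0 n) hm0
  rw [ae_restrict_iff' hRm, ae_iff] at hnull
  refine hA.ne' ?_
  convert hnull using 2
  ext x
  simp
end

section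
/- Maximum principle for the critical gauge equations: (i) there exists a point u_0 ∈ U \ U° at which q/q_− attains its minimum over U, i.e. q(u_0)/q_−(u_0) ≤ q(u)/q_−(u) for all u ∈ U; (ii) likewise, if q_+ : ℤ^d → ℝ is positive on U and satisfies the supersolution inequality 1/q_+(u) < Σ_{i=1}^D ( Σ_{j=1}^D q_+(u + v(i,j)) )^{−1} at every u ∈ U°, then q/q_+ attains its maximum over U at some point of U \ U°. -/
/-- `u` is an interior point of the finite set `U ⊆ ℤ^d` for the shift vectors `v i j`:
`u ∈ U` and all shifts `u + v i j` remain in `U`. -/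
def IsInteriorPt {d D : ℕ} (v : Fin D → Fin D → (Fin d → ℤ)) (U : Finset (Fin d → ℤ))
    (u : Fin d → ℤ) : Prop :=
  u ∈ U ∧ ∀ i j, u + v i j ∈ U

theorem gauge_aux {d D : ℕ} (v : Fin D → Fin D → (Fin d → ℤ)) (hD : 1 ≤ D)
    (U : Finset (Fin d → ℤ)) (a b : (Fin d → ℤ) → ℝ)
    (ha : ∀ u ∈ U, 0 < a u) (hb : ∀ u ∈ U, 0 < b u) (u : Fin d → ℤ)
    (hu : IsInteriorPt v U u) (h : ∀ w ∈ U, a u * b w ≤ a w * b u) :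
    a u * ∑ i, (∑ j, a (u + v i j))⁻¹ ≤ b u * ∑ i, (∑ j, b (u + v i j))⁻¹ := by
  rw [Finset.mul_sum, Finset.mul_sum]
  refine Finset.sum_le_sum fun i _ => ?_
  have hne : (Finset.univ : Finset (Fin D)).Nonempty := ⟨⟨0, hD⟩, Finset.mem_univ _⟩
  have hA : 0 < ∑ j, a (u + v i j) := Finset.sum_pos (fun j _ => ha _ (hu.2 i j)) hne
  have hB : 0 < ∑ j, b (u + v i j) := Finset.sum_pos (fun j _ => hb _ (hu.2 i j)) hne
  rw [← div_eq_mul_inv, ← div_eq_mul_inv, div_le_div_iff₀ hA hB, Finset.mul_sum, Finset.mul_sum]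
  refine Finset.sum_le_sum fun j _ => ?_
  have := h _ (hu.2 i j)
  linarith

/-- Maximum principle for the critical gauge equations: if on a finite nonempty
`U ⊆ ℤ^d` the positive function `q` solves the critical gauge equation
`1/q(u) = Σ_i (Σ_j q(u + v(i,j)))⁻¹` at every interior point, then
(i) for every positive subsolution `q₋` (with `1/q₋(u) > Σ_i (Σ_j q₋(u+v(i,j)))⁻¹` at
interior points) the ratio `q/q₋` attains its minimum over `U` at a point of `U \ U°`;
(ii) for every positive supersolution `q₊` the ratio `q/q₊` attains its maximum over `U`
at a point of `U \ U°`. -/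
theorem maximum_principle_critical_gauge
    (d D : ℕ) (hd : 1 ≤ d) (hD : 1 ≤ D)
    (v : Fin D → Fin D → (Fin d → ℤ))
    (U : Finset (Fin d → ℤ)) (hU : U.Nonempty)
    (q qm : (Fin d → ℤ) → ℝ)
    (hqpos : ∀ u ∈ U, 0 < q u) (hqmpos : ∀ u ∈ U, 0 < qm u)
    (hq : ∀ u, IsInteriorPt v U u → (q u)⁻¹ = ∑ i, (∑ j, q (u + v i j))⁻¹)
    (hqm : ∀ u, IsInteriorPt v U u → ∑ i, (∑ j, qm (u + v i j))⁻¹ < (qm u)⁻¹) :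
    (∃ u₀ ∈ U, ¬ IsInteriorPt v U u₀ ∧ ∀ u ∈ U, q u₀ / qm u₀ ≤ q u / qm u) ∧
    (∀ qp : (Fin d → ℤ) → ℝ, (∀ u ∈ U, 0 < qp u) →
      (∀ u, IsInteriorPt v U u → (qp u)⁻¹ < ∑ i, (∑ j, qp (u + v i j))⁻¹) →
      ∃ u₁ ∈ U, ¬ IsInteriorPt v U u₁ ∧ ∀ u ∈ U, q u / qp u ≤ q u₁ / qp u₁) := by
  constructor
  · obtain ⟨u, hu, hmin⟩ := U.exists_min_image (fun w => q w / qm w) hU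
    refine ⟨u, hu, fun hint => ?_, hmin⟩
    have key := gauge_aux v hD U q qm hqpos hqmpos u hint (fun w hw =>
      (div_le_div_iff₀ (hqmpos u hu) (hqmpos w hw)).1 (hmin w hw))
    have h1 := mul_lt_mul_of_pos_left (hqm u hint) (hqmpos u hu)
    rw [← hq u hint, mul_inv_cancel₀ (hqpos u hu).ne'] at key
    rw [mul_inv_cancel₀ (hqmpos u hu).ne'] at h1
    linarith
  · intro qp hqp hs
    obtain ⟨u, hu, hmax⟩ := U.exists_max_image (fun w => q w / qp w) hU
    refine ⟨u, hu, fun hint => ?_, hmax⟩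
    have key := gauge_aux v hD U qp q hqp hqpos u hint (fun w hw => by
      have := (div_le_div_iff₀ (hqp w hw) (hqp u hu)).1 (hmax w hw)
      linarith)
    have h1 := mul_lt_mul_of_pos_left (hs u hint) (hqp u hu)
    rw [← hq u hint, mul_inv_cancel₀ (hqpos u hu).ne'] at key
    rw [mul_inv_cancel₀ (hqp u hu).ne'] at h1
    linarith
end

section
/- Expansion of the critical gauge equations: as n → ∞, C_n(u) := Σ_{i=1}^D [ Σ_{j=1}^D exp( n·( q(u + (e_j − e_i)/n) − q(u) ) ) ]^{−1} satisfies C_n(u) = 1 − 𝒟q(u)/n + O(1/n²), where 𝒟q(u) := (1/2) · Σ_{i,j=1}^D [ exp(⟨e_i + e_j, ∇q(u)⟩) / ( Σ_{k=1}^D exp(⟨e_k, ∇q(u)⟩) )² ] · ⟨ e_j − e_i, (Hess q)(u) (e_j − e_i) ⟩; that is, there exist C ≥ 0 and n_0 such that |C_n(u) − 1 + 𝒟q(u)/n| ≤ C/n² for all n ≥ n_0. -/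
open Filter Topology Asymptotics

theorem aux_int {g g' : ℝ → ℝ} {k : ℕ} (hg : ∀ᶠ t in 𝓝 (0:ℝ), HasDerivAt g (g' t) t)
    (h0 : g 0 = 0) (hO : g' =O[𝓝 0] fun t => t ^ k) : g =O[𝓝 0] fun t => t ^ (k+1) := by
  obtain ⟨C, hC⟩ := hO.bound
  obtain ⟨r, hr, hb⟩ := Metric.eventually_nhds_iff_ball.1 (hg.and hC)
  refine IsBigO.of_bound C ?_
  filter_upwards [Metric.ball_mem_nhds (0:ℝ) hr] with t ht
  have hsub : ∀ s ∈ segment ℝ 0 t, |s| ≤ |t| := by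
    intro s hs
    obtain ⟨a, b, ha, hb, hab, rfl⟩ := hs
    rw [smul_zero, zero_add, smul_eq_mul, abs_mul, abs_of_nonneg hb]
    nlinarith [abs_nonneg t]
  have hin : ∀ s ∈ segment ℝ 0 t, s ∈ Metric.ball (0:ℝ) r := by
    intro s hs
    rw [mem_ball_zero_iff] at ht ⊢
    exact lt_of_le_of_lt (hsub s hs) ht
  have hCn : 0 ≤ C ∨ t = 0 := by
    by_cases h : t = 0
    · exact Or.inr h
    · left
      have := (hb t ht).2
      have h2 : 0 < ‖t ^ k‖ := norm_pos_iff.2 (pow_ne_zero k h)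
      by_contra hneg
      push Not at hneg
      nlinarith [norm_nonneg (g' t)]
  rcases hCn with hCn | rfl
  swap
  · simp [h0]
  have := (convex_segment (𝕜 := ℝ) (0:ℝ) t).norm_image_sub_le_of_norm_hasDerivWithin_le
    (C := C * |t| ^ k)
    (fun s hs => (hb s (hin s hs)).1.hasDerivWithinAt)
    (fun s hs => by
      refine (hb s (hin s hs)).2.trans ?_
      rw [norm_pow, Real.norm_eq_abs]
      exact mul_le_mul_of_nonneg_left (pow_le_pow_left₀ (abs_nonneg s) (hsub s hs) k) hCn)
    (left_mem_segment ℝ 0 t) (right_mem_segment ℝ 0 t)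
  simpa [h0, norm_pow, pow_succ, mul_assoc] using this

def Exp1 (F : ℝ → ℝ) (a b : ℝ) : Prop :=
  (fun t => F t - a - b * t) =O[𝓝[≠] (0:ℝ)] fun t => t ^ 2

theorem Exp1.sum {ι : Type*} (s : Finset ι) {F : ι → ℝ → ℝ} {a b : ι → ℝ}
    (h : ∀ i ∈ s, Exp1 (F i) (a i) (b i)) :
    Exp1 (fun t => ∑ i ∈ s, F i t) (∑ i ∈ s, a i) (∑ i ∈ s, b i) := by
  unfold Exp1
  have := IsBigO.sum h
  refine this.congr_left fun t => ?_
  simp [Finset.sum_sub_distrib, Finset.sum_mul]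

theorem Exp1.lin {F : ℝ → ℝ} {a b : ℝ} (h : Exp1 F a b) :
    (fun t => F t - a) =O[𝓝[≠] (0:ℝ)] fun t => t := by
  have h1 : (fun t : ℝ => t ^ 2) =O[𝓝[≠] (0:ℝ)] fun t => t :=
    (IsBigO.of_bound' (by
      have : ∀ᶠ t : ℝ in 𝓝 0, |t| < 1 := by
        filter_upwards [Metric.ball_mem_nhds (0:ℝ) one_pos] with t ht
        simpa using ht
      filter_upwards [this] with t ht
      rw [norm_pow, Real.norm_eq_abs]
      nlinarith [abs_nonneg t])).mono nhdsWithin_le_nhds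
  have h2 : (fun t : ℝ => b * t) =O[𝓝[≠] (0:ℝ)] fun t => t :=
    (isBigO_refl _ _).const_mul_left b
  refine ((h.trans h1).add h2).congr_left fun t => by ring

theorem Exp1.tendsto {F : ℝ → ℝ} {a b : ℝ} (h : Exp1 F a b) :
    Tendsto (fun t => F t - a) (𝓝[≠] (0:ℝ)) (𝓝 0) :=
  h.lin.trans_tendsto (tendsto_id.mono_left nhdsWithin_le_nhds)

theorem Exp1.comp {F : ℝ → ℝ} {a b : ℝ} (h : Exp1 F a b) {f f' : ℝ → ℝ}
    (hf : ∀ᶠ x in 𝓝 a, HasDerivAt f (f' x) x) (hf' : DifferentiableAt ℝ f' a) :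
    Exp1 (fun t => f (F t)) (f a) (f' a * b) := by
  have ht : Tendsto (fun s : ℝ => a + s) (𝓝 0) (𝓝 a) := by
    have : ContinuousAt (fun s : ℝ => a + s) 0 := by fun_prop
    simpa [ContinuousAt] using this
  have key : (fun s => f (a + s) - f a - f' a * s) =O[𝓝 0] fun s => s ^ (1 + 1) := by
    apply aux_int (g' := fun s => f' (a + s) - f' a)
    · filter_upwards [ht.eventually hf] with s hs
      have h1 : HasDerivAt (fun s => f (a + s)) (f' (a + s)) s := hs.comp_const_add a s
      have h2 : HasDerivAt (fun s : ℝ => f' a * s) (f' a) s := by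
        simpa using (hasDerivAt_id s).const_mul (f' a)
      exact (h1.sub_const _).sub h2
    · simp
    · have := hf'.isBigO_sub.comp_tendsto ht
      simpa [Function.comp_def] using this
  have h3 := (key.comp_tendsto h.tendsto).trans (h.lin.pow 2)
  have h4 := h.const_mul_left (f' a)
  unfold Exp1
  refine (h3.add h4).congr_left fun t => ?_
  simp only [Function.comp_apply]
  rw [add_sub_cancel]
  ring

theorem exp1_q {E : Type*} [NormedAddCommGroup E] [NormedSpace ℝ E] {q : E → ℝ} {u : E}
    (hq : ContDiffAt ℝ 3 q u) (v : E) :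
    Exp1 (fun t => t⁻¹ * (q (u + t • v) - q u)) (fderiv ℝ q u v)
      ((1/2) * fderiv ℝ (fderiv ℝ q) u v v) := by
  have hc : ∀ t : ℝ, HasDerivAt (fun t : ℝ => u + t • v) v t := fun t => by
    simpa using ((hasDerivAt_id t).smul_const v).const_add u
  have ht : Tendsto (fun t : ℝ => u + t • v) (𝓝 0) (𝓝 u) := by
    have := (hc 0).continuousAt
    simpa [ContinuousAt] using this
  have hq1 : ContDiffAt ℝ 2 (fderiv ℝ q) u := hq.fderiv_right (by norm_num)
  have hq2 : ContDiffAt ℝ 1 (fderiv ℝ (fderiv ℝ q)) u := hq1.fderiv_right (by norm_num)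
  have d1 : ∀ᶠ t in 𝓝 (0:ℝ), HasDerivAt (fun t : ℝ => q (u + t • v))
      (fderiv ℝ q (u + t • v) v) t := by
    filter_upwards [ht.eventually (hq.eventually (by simp))] with t h
    exact (h.differentiableAt (by simp)).hasFDerivAt.comp_hasDerivAt t (hc t)
  have d2 : ∀ᶠ t in 𝓝 (0:ℝ), HasDerivAt (fun t : ℝ => fderiv ℝ q (u + t • v) v)
      (fderiv ℝ (fderiv ℝ q) (u + t • v) v v) t := by
    filter_upwards [ht.eventually (hq1.eventually (by simp))] with t h
    have := (h.differentiableAt (by simp)).hasFDerivAt.comp_hasDerivAt t (hc t)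
    simpa using this.clm_apply (hasDerivAt_const t v)
  have d3 : (fun t : ℝ => fderiv ℝ (fderiv ℝ q) (u + t • v) v v - fderiv ℝ (fderiv ℝ q) u v v)
      =O[𝓝 0] fun t => t ^ 1 := by
    have hd : DifferentiableAt ℝ (fun t : ℝ => fderiv ℝ (fderiv ℝ q) (u + t • v) v v) 0 := by
      have h0 : DifferentiableAt ℝ (fderiv ℝ (fderiv ℝ q)) (u + (0:ℝ) • v) := by
        rw [zero_smul, add_zero]
        exact hq2.differentiableAt (by simp)
      have h1 : DifferentiableAt ℝ (fun t : ℝ => fderiv ℝ (fderiv ℝ q) (u + t • v)) 0 :=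
        DifferentiableAt.comp (G := E →L[ℝ] E →L[ℝ] ℝ) (g := fderiv ℝ (fderiv ℝ q)) (0:ℝ) h0 (hc 0).differentiableAt
      exact (h1.clm_apply (differentiableAt_const v)).clm_apply (differentiableAt_const v)
    simpa using hd.isBigO_sub
  have e2 : (fun t : ℝ => fderiv ℝ q (u + t • v) v - fderiv ℝ q u v
      - t * fderiv ℝ (fderiv ℝ q) u v v) =O[𝓝 0] fun t => t ^ (1+1) := by
    refine aux_int ?_ (by simp) d3
    filter_upwards [d2] with t h
    have h2 : HasDerivAt (fun t : ℝ => t * fderiv ℝ (fderiv ℝ q) u v v)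
        (fderiv ℝ (fderiv ℝ q) u v v) t := by
      simpa using (hasDerivAt_id t).mul_const (fderiv ℝ (fderiv ℝ q) u v v)
    exact (h.sub_const _).sub h2
  have e3 : (fun t : ℝ => q (u + t • v) - q u - t * fderiv ℝ q u v
      - t ^ 2 * ((1/2) * fderiv ℝ (fderiv ℝ q) u v v)) =O[𝓝 0] fun t => t ^ (1+1+1) := by
    refine aux_int ?_ (by simp) e2
    filter_upwards [d1] with t h
    have h2 : HasDerivAt (fun t : ℝ => t * fderiv ℝ q u v) (fderiv ℝ q u v) t := by
      simpa using (hasDerivAt_id t).mul_const (fderiv ℝ q u v)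
    have h3 : HasDerivAt (fun t : ℝ => t ^ 2 * ((1/2) * fderiv ℝ (fderiv ℝ q) u v v))
        (t * fderiv ℝ (fderiv ℝ q) u v v) t := by
      have := (hasDerivAt_pow 2 t).mul_const ((1/2) * fderiv ℝ (fderiv ℝ q) u v v)
      refine this.congr_deriv ?_
      push_cast; ring
    exact ((h.sub_const _).sub h2).sub h3
  have e4 := (isBigO_refl (fun t : ℝ => t⁻¹) (𝓝[≠] 0)).mul (e3.mono nhdsWithin_le_nhds)
  refine e4.congr' ?_ ?_
  · filter_upwards [self_mem_nhdsWithin] with t (h : t ≠ 0)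
    field_simp
  · filter_upwards [self_mem_nhdsWithin] with t (h : t ≠ 0)
    field_simp


/-- Expansion of the critical gauge equations: if `q` is `C³` on a neighborhood of `u`,
then `C_n(u) := Σ_i (Σ_j exp(n(q(u + (e_j − e_i)/n) − q(u))))⁻¹` satisfies
`C_n(u) = 1 − 𝒟q(u)/n + O(1/n²)`, where
`𝒟q(u) = (1/2) Σ_{i,j} [exp(⟨e_i+e_j, ∇q(u)⟩)/(Σ_k exp(⟨e_k, ∇q(u)⟩))²]
  · ⟨e_j − e_i, Hess q(u) (e_j − e_i)⟩`
(with `⟨e, ∇q(u)⟩` the directional derivative `fderiv ℝ q u e` and the Hessian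
quadratic form given by `fderiv ℝ (fderiv ℝ q) u`). -/
theorem expansion_critical_gauge_equations
    (d D : ℕ) (hd : 1 ≤ d) (hD : 1 ≤ D)
    (e : Fin D → (Fin d → ℝ)) (u : Fin d → ℝ)
    (q : (Fin d → ℝ) → ℝ)
    (hq : ∃ s ∈ nhds u, ContDiffOn ℝ 3 q s) :
    ∃ C : ℝ, 0 ≤ C ∧ ∃ n₀ : ℕ, ∀ n : ℕ, n₀ ≤ n →
      |(∑ i, (∑ j, Real.exp ((n : ℝ) *
            (q (u + ((n : ℝ))⁻¹ • (e j - e i)) - q u)))⁻¹) - 1 +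
          ((1 / 2) * ∑ i, ∑ j,
            (Real.exp (fderiv ℝ q u (e i + e j)) /
              (∑ k, Real.exp (fderiv ℝ q u (e k))) ^ 2) *
            (fderiv ℝ (fderiv ℝ q) u (e j - e i) (e j - e i))) / (n : ℝ)|
        ≤ C / (n : ℝ) ^ 2 := by
  obtain ⟨s, hs, hqs⟩ := hq
  have hqa : ContDiffAt ℝ 3 q u := hqs.contDiffAt hs
  have : Nonempty (Fin D) := ⟨⟨0, hD⟩⟩
  have hpos : ∀ x : Fin D → ℝ, 0 < ∑ j, Real.exp (x j) := fun x =>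
    Finset.sum_pos (fun j _ => Real.exp_pos _) Finset.univ_nonempty
  have key : Exp1 _ _ _ := Exp1.sum Finset.univ (fun i _ =>
    (Exp1.sum Finset.univ (fun j _ => (exp1_q hqa (e j - e i)).comp
      (f := Real.exp) (f' := Real.exp)
      (Eventually.of_forall Real.hasDerivAt_exp) Real.differentiableAt_exp)).comp
      (f := fun x => x⁻¹) (f' := fun x => -(x ^ 2)⁻¹)
      (by
        filter_upwards [eventually_ne_nhds (hpos _).ne'] with x hx
        exact hasDerivAt_inv hx)
      (by
        have := (hpos (fun j => fderiv ℝ q u (e j - e i))).ne'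
        fun_prop (disch := positivity)))
  set Z := ∑ k, Real.exp (fderiv ℝ q u (e k)) with hZ
  have hZ0 : 0 < Z := hpos _
  have hS : ∀ i, ∑ j, Real.exp (fderiv ℝ q u (e j - e i))
      = Real.exp (-fderiv ℝ q u (e i)) * Z := by
    intro i
    rw [hZ, Finset.mul_sum]
    refine Finset.sum_congr rfl fun j _ => ?_
    rw [← Real.exp_add, map_sub]; congr 1; ring
  have ha : ∑ i, (∑ j, Real.exp (fderiv ℝ q u (e j - e i)))⁻¹ = 1 := by
    have : ∀ i, (∑ j, Real.exp (fderiv ℝ q u (e j - e i)))⁻¹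
        = Real.exp (fderiv ℝ q u (e i)) * Z⁻¹ := by
      intro i
      rw [hS, mul_inv, Real.exp_neg, inv_inv]
    simp_rw [this]
    rw [← Finset.sum_mul, ← hZ, mul_inv_cancel₀ hZ0.ne']
  clear_value Z
  set B := (1 / 2) * ∑ i, ∑ j, (Real.exp (fderiv ℝ q u (e i + e j)) / Z ^ 2) *
            (fderiv ℝ (fderiv ℝ q) u (e j - e i) (e j - e i)) with hB
  have hb : ∑ i, (-((∑ j, Real.exp (fderiv ℝ q u (e j - e i))) ^ 2)⁻¹ *
      ∑ j, Real.exp (fderiv ℝ q u (e j - e i)) *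
        ((1/2) * fderiv ℝ (fderiv ℝ q) u (e j - e i) (e j - e i))) = -B := by
    rw [hB, Finset.mul_sum, ← Finset.sum_neg_distrib]
    refine Finset.sum_congr rfl fun i _ => ?_
    rw [hS, Finset.mul_sum, Finset.mul_sum, ← Finset.sum_neg_distrib]
    refine Finset.sum_congr rfl fun j _ => ?_
    rw [map_sub (fderiv ℝ q u), map_add (fderiv ℝ q u), Real.exp_add, Real.exp_neg, Real.exp_sub]
    have := (Real.exp_pos (fderiv ℝ q u (e i))).ne'
    field_simp
  rw [ha, hb] at key
  have hlim : Tendsto (fun n : ℕ => (n:ℝ)⁻¹) atTop (𝓝[≠] 0) := by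
    refine tendsto_nhdsWithin_iff.2 ⟨tendsto_inv_atTop_nhds_zero_nat, ?_⟩
    filter_upwards [eventually_gt_atTop 0] with n hn
    have : (n:ℝ) ≠ 0 := by positivity
    simpa using this
  have h2 : _ =O[_] _ := key.comp_tendsto hlim
  obtain ⟨C, hC, hbd⟩ := h2.exists_nonneg
  obtain ⟨n₀, hn₀⟩ := eventually_atTop.1 hbd.bound
  refine ⟨C, hC, n₀, fun n hn => ?_⟩
  have := hn₀ n hn
  simp only [Function.comp_apply, Real.norm_eq_abs, inv_inv, inv_pow, abs_inv, abs_pow,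
    Nat.abs_cast] at this
  rw [div_eq_mul_inv C]
  refine le_trans (le_of_eq ?_) this
  congr 1
  rw [div_eq_mul_inv]
  ring
end

section
/- Divergence identity for the gauge operator: if q : ℝ^d → ℝ is C², then the C¹ vector field x ↦ ∇F(∇q(x)) satisfies div(∇F(∇q))(x) = (1/2) · Σ_{i,j=1}^D [ exp(⟨e_i + e_j, ∇q(x)⟩) / ( Σ_{k=1}^D exp(⟨e_k, ∇q(x)⟩) )² ] · ⟨ e_j − e_i, (Hess q)(x) (e_j − e_i) ⟩ for every x ∈ ℝ^d, where Hess q is the Hessian of q and div is the sum of the coordinate partial derivatives. -/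
theorem gauge_alg {D : ℕ} (w : Fin D → ℝ) (B : Fin D → Fin D → ℝ) (hZ : (∑ k, w k) ≠ 0) :
    (∑ k, w k)⁻¹ * (∑ j, w j * B j j) - ((∑ k, w k) ^ 2)⁻¹ * ∑ k, ∑ j, w k * w j * B j k
      = (1 / 2) * ∑ i, ∑ j, (w i * w j / (∑ k, w k) ^ 2) *
        (B j j - B j i - (B i j - B i i)) := by
  have h1 : ∑ i, ∑ j, w i * w j * B j j = (∑ k, w k) * ∑ j, w j * B j j := by
    rw [Finset.sum_mul_sum]
    simp only [mul_assoc]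
  have h2 : ∑ i, ∑ j, w i * w j * B i i = (∑ k, w k) * ∑ j, w j * B j j := by
    rw [← h1, Finset.sum_comm]
    exact Finset.sum_congr rfl fun i _ => Finset.sum_congr rfl fun j _ => by ring
  have h3 : ∑ i, ∑ j, w i * w j * B i j = ∑ i, ∑ j, w i * w j * B j i := by
    rw [Finset.sum_comm]
    exact Finset.sum_congr rfl fun i _ => Finset.sum_congr rfl fun j _ => by ring
  have h4 : ∑ i, ∑ j, (w i * w j / (∑ k, w k) ^ 2) * (B j j - B j i - (B i j - B i i))
      = ((∑ k, w k) ^ 2)⁻¹ * (∑ i, ∑ j, w i * w j * B j j - ∑ i, ∑ j, w i * w j * B j i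
        - (∑ i, ∑ j, w i * w j * B i j - ∑ i, ∑ j, w i * w j * B i i)) := by
    simp only [← Finset.sum_sub_distrib, Finset.mul_sum]
    exact Finset.sum_congr rfl fun i _ => Finset.sum_congr rfl fun j _ => by ring
  rw [h4, h1, h2, h3]
  field_simp
  ring

/-- Divergence identity for the gauge operator: for `F(α) = log(Σ_j exp(⟨e_j, α⟩))` with
gradient `∇F(α) = (Σ_j exp(⟨e_j, α⟩) e_j)/(Σ_k exp(⟨e_k, α⟩))`, and `q : ℝ^d → ℝ` of
class `C²`, the vector field `x ↦ ∇F(∇q(x))` satisfies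
`div(∇F(∇q))(x) = (1/2) Σ_{i,j} [exp(⟨e_i+e_j, ∇q(x)⟩)/(Σ_k exp(⟨e_k, ∇q(x)⟩))²]
  · ⟨e_j − e_i, Hess q(x)(e_j − e_i)⟩`
for every `x`, where `⟨e, ∇q(x)⟩ = fderiv ℝ q x e`, the Hessian quadratic form is given
by `fderiv ℝ (fderiv ℝ q) x`, and `div` is the sum of the coordinate partial
derivatives. -/
theorem divergence_identity_gauge_operator
    (d D : ℕ) (hd : 1 ≤ d) (hD : 1 ≤ D)
    (e : Fin D → (Fin d → ℝ))
    (q : (Fin d → ℝ) → ℝ) (hq : ContDiff ℝ 2 q) (x : Fin d → ℝ) :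
    (∑ i, fderiv ℝ (fun y : Fin d → ℝ =>
        (∑ k, Real.exp (fderiv ℝ q y (e k)))⁻¹ *
          ∑ j, Real.exp (fderiv ℝ q y (e j)) * e j i) x (Pi.single i 1))
      = (1 / 2) * ∑ i, ∑ j,
          (Real.exp (fderiv ℝ q x (e i + e j)) /
            (∑ k, Real.exp (fderiv ℝ q x (e k))) ^ 2) *
          (fderiv ℝ (fderiv ℝ q) x (e j - e i) (e j - e i)) := by
  have hdq : Differentiable ℝ (fderiv ℝ q) :=
    (hq.fderiv_right (m := 1) (by norm_num)).differentiable (by norm_num)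
  set H := fderiv ℝ (fderiv ℝ q) x with hH
  have hw : ∀ k, HasFDerivAt (fun y => Real.exp (fderiv ℝ q y (e k)))
      (Real.exp (fderiv ℝ q x (e k)) • H.flip (e k)) x := by
    intro k
    have h0 : HasFDerivAt (fun y => fderiv ℝ q y (e k)) (H.flip (e k)) x := by
      have := (hdq x).hasFDerivAt.clm_apply (hasFDerivAt_const (e k) x)
      simpa using this
    exact h0.exp
  have hZpos : 0 < ∑ k, Real.exp (fderiv ℝ q x (e k)) :=
    Finset.sum_pos (fun _ _ => Real.exp_pos _) ⟨⟨0, hD⟩, Finset.mem_univ _⟩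
  have hZ := hZpos.ne'
  have hZd := HasFDerivAt.fun_sum (u := Finset.univ) fun k _ => hw k
  have hterm : ∀ i, fderiv ℝ (fun y : Fin d → ℝ =>
        (∑ k, Real.exp (fderiv ℝ q y (e k)))⁻¹ *
          ∑ j, Real.exp (fderiv ℝ q y (e j)) * e j i) x (Pi.single i 1)
      = (∑ k, Real.exp (fderiv ℝ q x (e k)))⁻¹ *
          (∑ j, Real.exp (fderiv ℝ q x (e j)) * (e j i * H (Pi.single i 1) (e j)))
        - ((∑ k, Real.exp (fderiv ℝ q x (e k))) ^ 2)⁻¹ *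
          ∑ k, ∑ j, Real.exp (fderiv ℝ q x (e k)) * Real.exp (fderiv ℝ q x (e j)) *
            (e j i * H (Pi.single i 1) (e k)) := by
    intro i
    have hN := HasFDerivAt.fun_sum (u := Finset.univ) fun j _ => (hw j).mul_const (e j i)
    have hI := (hasDerivAt_inv hZ).comp_hasFDerivAt x hZd
    have := (hI.mul hN).fderiv
    have h2 := congrArg (fun L => L (Pi.single i 1)) this
    refine Eq.trans h2 ?_
    have e1 : ∑ k, ∑ j, Real.exp (fderiv ℝ q x (e k)) * Real.exp (fderiv ℝ q x (e j)) *
            (e j i * H (Pi.single i 1) (e k))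
        = (∑ k, Real.exp (fderiv ℝ q x (e k)) * H (Pi.single i 1) (e k)) *
          ∑ j, Real.exp (fderiv ℝ q x (e j)) * e j i := by
      rw [Finset.sum_mul_sum]
      exact Finset.sum_congr rfl fun i _ => Finset.sum_congr rfl fun j _ => by ring
    have e2 : ∑ j, Real.exp (fderiv ℝ q x (e j)) * (e j i * H (Pi.single i 1) (e j))
        = ∑ j, e j i * (Real.exp (fderiv ℝ q x (e j)) * H (Pi.single i 1) (e j)) :=
      Finset.sum_congr rfl fun j _ => by ring
    rw [e1, e2]
    simp only [ContinuousLinearMap.add_apply, ContinuousLinearMap.smul_apply,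
      ContinuousLinearMap.sum_apply, ContinuousLinearMap.flip_apply, smul_eq_mul,
      Function.comp_apply]
    ring
  have hB : ∀ u v : Fin d → ℝ, ∑ i, u i * H (Pi.single i 1) v = H u v := by
    intro u v
    conv_rhs => rw [pi_eq_sum_univ' u]
    simp only [map_sum, map_smul, ContinuousLinearMap.sum_apply,
      ContinuousLinearMap.smul_apply, smul_eq_mul]
  have key := gauge_alg (fun k => Real.exp (fderiv ℝ q x (e k))) (fun j k => H (e j) (e k)) hZ
  simp only [hterm, map_add, Real.exp_add, map_sub, ContinuousLinearMap.sub_apply]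
  rw [Finset.sum_sub_distrib, ← Finset.mul_sum, ← Finset.mul_sum, Finset.sum_comm]
  have c2 : ∑ i, ∑ k, ∑ j, Real.exp (fderiv ℝ q x (e k)) * Real.exp (fderiv ℝ q x (e j)) *
            (e j i * H (Pi.single i 1) (e k)) =
      ∑ k, ∑ j, Real.exp (fderiv ℝ q x (e k)) * Real.exp (fderiv ℝ q x (e j)) *
            H (e j) (e k) := by
    rw [Finset.sum_comm]
    refine Finset.sum_congr rfl fun k _ => ?_
    rw [Finset.sum_comm]
    refine Finset.sum_congr rfl fun j _ => ?_
    rw [← Finset.mul_sum, hB]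
  rw [c2]
  simp only [← Finset.mul_sum, hB]
  rw [key]
  refine congrArg _ (Finset.sum_congr rfl fun i _ => Finset.sum_congr rfl fun j _ => ?_)
  ring
end

section
/- Critical gauge of the Aztec diamond: for every n ≥ 1, the functions f and g satisfy the critical gauge equations at every vertex of AD(n): for all integers 0 ≤ i ≤ n−1 and 0 ≤ j ≤ n, f(i,j) · Σ g(i',j') = 1, where the sum is over the black neighbors (i',j') ∈ {(i,j), (i+1,j), (i,j−1), (i+1,j−1)} with 0 ≤ i' ≤ n and 0 ≤ j' ≤ n−1; and for all integers 0 ≤ i ≤ n and 0 ≤ j ≤ n−1, g(i,j) · Σ f(i',j') = 1, where the sum is over the white neighbors (i',j') ∈ {(i,j), (i−1,j), (i,j+1), (i−1,j+1)} with 0 ≤ i' ≤ n−1 and 0 ≤ j' ≤ n. -/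
/-- The critical gauge function on white vertices of the Aztec diamond `AD(n)`:
`f(i,j) = (n/(n+1)) · C(n−1,i)/C(n,j)`. -/
noncomputable def aztecF (n i j : ℕ) : ℝ :=
  ((n : ℝ) / ((n : ℝ) + 1)) * (Nat.choose (n - 1) i : ℝ) / (Nat.choose n j : ℝ)

/-- The critical gauge function on black vertices of the Aztec diamond `AD(n)`:
`g(i,j) = C(n−1,j)/C(n,i)`. -/
noncomputable def aztecG (n i j : ℕ) : ℝ :=
  (Nat.choose (n - 1) j : ℝ) / (Nat.choose n i : ℝ)

theorem aztec_inv_sum (m i : ℕ) (h : i ≤ m) :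
    ((m : ℝ) + 1) * (Nat.choose m i : ℝ) *
      (((m + 1).choose i : ℝ)⁻¹ + ((m + 1).choose (i + 1) : ℝ)⁻¹) = (m : ℝ) + 2 := by
  have h1 : ((m : ℝ) + 1) * (m.choose i : ℝ) = ((m + 1).choose i : ℝ) * ((m : ℝ) + 1 - i) := by
    have := Nat.choose_mul_succ_eq m i
    have e : ((m + 1 - i : ℕ) : ℝ) = (m : ℝ) + 1 - i := by
      rw [Nat.cast_sub (by omega)]; push_cast; ring
    rw [← e]
    rw [mul_comm]
    exact_mod_cast this
  have h2 : ((m : ℝ) + 1) * (m.choose i : ℝ) = ((m + 1).choose (i + 1) : ℝ) * ((i : ℝ) + 1) := by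
    exact_mod_cast Nat.add_one_mul_choose_eq m i
  have p1 : ((m + 1).choose i : ℝ) ≠ 0 := by
    exact_mod_cast (Nat.choose_pos (by omega)).ne'
  have p2 : ((m + 1).choose (i + 1) : ℝ) ≠ 0 := by
    exact_mod_cast (Nat.choose_pos (by omega)).ne'
  rw [mul_add]
  nth_rewrite 1 [h1]
  rw [h2]
  field_simp
  ring

theorem aztec_pascal (m j : ℕ) (a b : ℝ) :
    (if j ≤ m then (m.choose j : ℝ) * a + (m.choose j : ℝ) * b else 0) +
      (if 1 ≤ j then (m.choose (j - 1) : ℝ) * a + (m.choose (j - 1) : ℝ) * b else 0)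
      = ((m + 1).choose j : ℝ) * (a + b) := by
  have e : (if j ≤ m then (m.choose j : ℝ) * a + (m.choose j : ℝ) * b else 0)
      = (m.choose j : ℝ) * (a + b) := by
    split_ifs with h
    · ring
    · rw [Nat.choose_eq_zero_of_lt (by omega)]; simp
  rw [e]
  cases j with
  | zero => simp
  | succ k =>
    rw [Nat.choose_succ_succ]
    simp
    ring

/-- Critical gauge of the Aztec diamond: for every `n ≥ 1` the functions `f` and `g`
satisfy the critical gauge equations at every white vertex (`0 ≤ i ≤ n−1`, `0 ≤ j ≤ n`)
and every black vertex (`0 ≤ i ≤ n`, `0 ≤ j ≤ n−1`), where the sums run over the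
neighbors that lie in range. -/
theorem aztec_diamond_critical_gauge (n : ℕ) (hn : 1 ≤ n) :
    (∀ i j : ℕ, i ≤ n - 1 → j ≤ n →
      aztecF n i j *
          ((if j ≤ n - 1 then aztecG n i j + aztecG n (i + 1) j else 0) +
            (if 1 ≤ j then aztecG n i (j - 1) + aztecG n (i + 1) (j - 1) else 0)) = 1) ∧
    (∀ i j : ℕ, i ≤ n → j ≤ n - 1 →
      aztecG n i j *
          ((if i ≤ n - 1 then aztecF n i j + aztecF n i (j + 1) else 0) +
            (if 1 ≤ i then aztecF n (i - 1) j + aztecF n (i - 1) (j + 1) else 0)) = 1) := by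
  obtain ⟨m, rfl⟩ : ∃ m, n = m + 1 := ⟨n - 1, by omega⟩
  have hm : (m : ℝ) + 2 ≠ 0 := by positivity
  constructor
  · intro i j hi hj
    have p : ((m + 1).choose j : ℝ) ≠ 0 := by
      exact_mod_cast (Nat.choose_pos hj).ne'
    have A := aztec_inv_sum m i hi
    simp only [aztecF, aztecG, Nat.add_sub_cancel, div_eq_mul_inv (Nat.cast (Nat.choose m _) : ℝ)]
    rw [aztec_pascal]
    push_cast
    have e : (m : ℝ) + 1 + 1 = m + 2 := by ring
    rw [e]
    generalize ((m + 1).choose i : ℝ)⁻¹ + ((m + 1).choose (i + 1) : ℝ)⁻¹ = S at *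
    field_simp
    linarith
  · intro i j hi hj
    have p : ((m + 1).choose i : ℝ) ≠ 0 := by
      exact_mod_cast (Nat.choose_pos hi).ne'
    have A := aztec_inv_sum m j hj
    have hF : ∀ a b, aztecF (m + 1) a b = (m.choose a : ℝ) *
        (((m : ℝ) + 1) / ((m : ℝ) + 2) * ((m + 1).choose b : ℝ)⁻¹) := by
      intro a b
      simp only [aztecF, Nat.add_sub_cancel]
      push_cast
      have e : (m : ℝ) + 1 + 1 = m + 2 := by ring
      rw [e]
      ring
    simp only [hF, aztecG, Nat.add_sub_cancel]
    rw [aztec_pascal, ← mul_add]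
    generalize ((m + 1).choose j : ℝ)⁻¹ + ((m + 1).choose (j + 1) : ℝ)⁻¹ = S at *
    field_simp
    linarith
end

section
/- The limiting gauge function of the Aztec diamond solves the gauge PDE: the function H(x,y) = x·log x + (1−x)·log(1−x) − y·log y − (1−y)·log(1−y) satisfies, at every point of the open square (0,1)², the equation e^{H_x}·H_{xx}/(1+e^{H_x})² + e^{H_y}·H_{yy}/(1+e^{H_y})² = 0, where H_x, H_y denote first partial derivatives and H_{xx}, H_{yy} second partial derivatives of H. -/
/-- The limiting gauge function of the Aztec diamond:
`H(x,y) = x log x + (1−x) log(1−x) − y log y − (1−y) log(1−y)`. -/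
noncomputable def aztecGauge (x y : ℝ) : ℝ :=
  x * Real.log x + (1 - x) * Real.log (1 - x) -
    y * Real.log y - (1 - y) * Real.log (1 - y)

theorem aux_ent (c s : ℝ) (hs : s ∈ Set.Ioo (0 : ℝ) 1) :
    HasDerivAt (fun s => s * Real.log s + (1 - s) * Real.log (1 - s) + c)
      (Real.log s - Real.log (1 - s)) s := by
  have h0 : s ≠ 0 := hs.1.ne'
  have h1 : 1 - s ≠ 0 := (sub_pos.2 hs.2).ne'
  have hi := (hasDerivAt_id' s).const_sub 1
  have h := (((hasDerivAt_id' s).mul (Real.hasDerivAt_log h0)).add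
    (hi.mul (hi.log h1))).add_const c
  refine h.congr_deriv ?_
  field_simp
  ring

theorem aux_log (s : ℝ) (hs : s ∈ Set.Ioo (0 : ℝ) 1) :
    HasDerivAt (fun s => Real.log s - Real.log (1 - s)) (1 / (s * (1 - s))) s := by
  have h0 : s ≠ 0 := hs.1.ne'
  have h1 : 1 - s ≠ 0 := (sub_pos.2 hs.2).ne'
  have hi := (hasDerivAt_id' s).const_sub 1
  have h := (Real.hasDerivAt_log h0).sub (hi.log h1)
  refine h.congr_deriv ?_
  field_simp
  ring

/-- The limiting gauge function of the Aztec diamond solves the gauge PDE: at every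
point of the open unit square,
`e^{H_x}·H_{xx}/(1+e^{H_x})² + e^{H_y}·H_{yy}/(1+e^{H_y})² = 0`,
where subscripts denote partial derivatives. -/
theorem aztec_gauge_solves_gauge_PDE
    (x y : ℝ) (hx : x ∈ Set.Ioo (0 : ℝ) 1) (hy : y ∈ Set.Ioo (0 : ℝ) 1) :
    Real.exp (deriv (fun s => aztecGauge s y) x) *
        deriv (deriv (fun s => aztecGauge s y)) x /
        (1 + Real.exp (deriv (fun s => aztecGauge s y) x)) ^ 2 +
      Real.exp (deriv (fun t => aztecGauge x t) y) *
        deriv (deriv (fun t => aztecGauge x t)) y /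
        (1 + Real.exp (deriv (fun t => aztecGauge x t) y)) ^ 2 = 0 := by
  have hX : ∀ s ∈ Set.Ioo (0 : ℝ) 1, deriv (fun s => aztecGauge s y) s
      = Real.log s - Real.log (1 - s) := by
    intro s hs
    rw [← (aux_ent (-(y * Real.log y) - (1 - y) * Real.log (1 - y)) s hs).deriv]
    congr 1
    funext s
    unfold aztecGauge
    ring
  have hY : ∀ s ∈ Set.Ioo (0 : ℝ) 1, deriv (fun t => aztecGauge x t) s
      = -(Real.log s - Real.log (1 - s)) := by
    intro s hs
    rw [← (aux_ent (-(x * Real.log x) - (1 - x) * Real.log (1 - x)) s hs).fun_neg.deriv]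
    congr 1
    funext s
    unfold aztecGauge
    ring
  have hXX : deriv (deriv (fun s => aztecGauge s y)) x = 1 / (x * (1 - x)) := by
    rw [← (aux_log x hx).deriv]
    apply Filter.EventuallyEq.deriv_eq
    filter_upwards [isOpen_Ioo.mem_nhds hx] with s hs using hX s hs
  have hYY : deriv (deriv (fun t => aztecGauge x t)) y = -(1 / (y * (1 - y))) := by
    rw [← (aux_log y hy).fun_neg.deriv]
    apply Filter.EventuallyEq.deriv_eq
    filter_upwards [isOpen_Ioo.mem_nhds hy] with s hs using hY s hs
  have x0 := hx.1
  have x1 := sub_pos.2 hx.2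
  have y0 := hy.1
  have y1 := sub_pos.2 hy.2
  rw [hXX, hYY, hX x hx, hY y hy, neg_sub, Real.exp_sub, Real.exp_sub, Real.exp_log x0,
    Real.exp_log x1, Real.exp_log y0, Real.exp_log y1]
  have e1 : 1 + x / (1 - x) = 1 / (1 - x) := by field_simp; ring
  have e2 : 1 + (1 - y) / y = 1 / y := by field_simp; ring
  rw [e1, e2]
  field_simp
  try ring
end

section
/- The limiting gauge function of the Aztec cuboid solves the three-dimensional gauge PDE: let A, B, C > 0 satisfy 1/A = 1/B + 1/C, and define H(x,y,z) = A·log A − x·log x − (A−x)·log(A−x) − B·log B + y·log y + (B−y)·log(B−y) − C·log C + z·log z + (C−z)·log(C−z). Then at every point of (0,A) × (0,B) × (0,C), e^{H_x}·H_{xx}/(1+e^{H_x})² + e^{H_y}·H_{yy}/(1+e^{H_y})² + e^{H_z}·H_{zz}/(1+e^{H_z})² = 0, where subscripts denote partial derivatives. -/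
/-- The limiting gauge function of the Aztec cuboid with aspect ratio `(A,B,C)`:
`H(x,y,z) = A log A − x log x − (A−x) log(A−x) − B log B + y log y + (B−y) log(B−y)
  − C log C + z log z + (C−z) log(C−z)`. -/
noncomputable def cuboidGauge (A B C x y z : ℝ) : ℝ :=
  A * Real.log A - x * Real.log x - (A - x) * Real.log (A - x) -
    B * Real.log B + y * Real.log y + (B - y) * Real.log (B - y) -
    C * Real.log C + z * Real.log z + (C - z) * Real.log (C - z)

lemma gauge_aux_s16 (k e B y : ℝ) (he : e = 1 ∨ e = -1) (f : ℝ → ℝ)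
    (hf : ∀ s, f s = k + e * (s * Real.log s + (B - s) * Real.log (B - s)))
    (hy : y ∈ Set.Ioo 0 B) :
    Real.exp (deriv f y) * deriv (deriv f) y / (1 + Real.exp (deriv f y)) ^ 2 = e / B := by
  have h1 : ∀ s ∈ Set.Ioo 0 B, deriv f s = e * (Real.log s - Real.log (B - s)) := by
    intro s hs
    have hs1 : s ≠ 0 := hs.1.ne'
    have hs2 : B - s ≠ 0 := (sub_pos.2 hs.2).ne'
    have hd : HasDerivAt (fun s : ℝ => B - s) (-1) s := by
      simpa using (hasDerivAt_id s).const_sub B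
    have a := (Real.hasDerivAt_mul_log hs1)
    have b := (Real.hasDerivAt_mul_log hs2).comp s hd
    have c := ((a.add b).const_mul e).const_add k
    rw [funext hf]
    refine (c.congr_deriv ?_).deriv
    ring
  have h2 : deriv (deriv f) y = e * (1 / y + 1 / (B - y)) := by
    have hs1 : y ≠ 0 := hy.1.ne'
    have hs2 : B - y ≠ 0 := (sub_pos.2 hy.2).ne'
    have hE : deriv f =ᶠ[nhds y] fun s => e * (Real.log s - Real.log (B - s)) :=
      Filter.eventuallyEq_of_mem (Ioo_mem_nhds hy.1 hy.2) h1
    rw [hE.deriv_eq]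
    have hd : HasDerivAt (fun s : ℝ => B - s) (-1) y := by
      simpa using (hasDerivAt_id y).const_sub B
    have c := ((Real.hasDerivAt_log hs1).sub (hd.log hs2)).const_mul e
    refine (c.congr_deriv ?_).deriv
    field_simp
    ring
  have p1 : 0 < y := hy.1
  have p2 : 0 < B - y := sub_pos.2 hy.2
  have p3 : 0 < B := p1.trans hy.2
  rw [h2, h1 y hy]
  rcases he with rfl | rfl
  · have : Real.exp (1 * (Real.log y - Real.log (B - y))) = y / (B - y) := by
      rw [one_mul, Real.exp_sub, Real.exp_log p1, Real.exp_log p2]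
    rw [this]
    have q : 1 + y / (B - y) = B / (B - y) := by field_simp; ring
    rw [q]
    field_simp
    ring
  · have : Real.exp (-1 * (Real.log y - Real.log (B - y))) = (B - y) / y := by
      rw [neg_one_mul, neg_sub, Real.exp_sub, Real.exp_log p1, Real.exp_log p2]
    rw [this]
    have q : 1 + (B - y) / y = B / y := by field_simp; ring
    rw [q]
    field_simp
    ring

/-- The limiting gauge function of the Aztec cuboid solves the three-dimensional gauge
PDE: if `A, B, C > 0` satisfy `1/A = 1/B + 1/C`, then at every point of
`(0,A) × (0,B) × (0,C)`,
`e^{H_x}H_{xx}/(1+e^{H_x})² + e^{H_y}H_{yy}/(1+e^{H_y})² + e^{H_z}H_{zz}/(1+e^{H_z})² = 0`,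
where subscripts denote partial derivatives. -/
theorem cuboid_gauge_solves_gauge_PDE
    (A B C : ℝ) (hA : 0 < A) (hB : 0 < B) (hC : 0 < C)
    (hABC : 1 / A = 1 / B + 1 / C)
    (x y z : ℝ) (hx : x ∈ Set.Ioo 0 A) (hy : y ∈ Set.Ioo 0 B) (hz : z ∈ Set.Ioo 0 C) :
    Real.exp (deriv (fun s => cuboidGauge A B C s y z) x) *
        deriv (deriv (fun s => cuboidGauge A B C s y z)) x /
        (1 + Real.exp (deriv (fun s => cuboidGauge A B C s y z) x)) ^ 2 +
      Real.exp (deriv (fun t => cuboidGauge A B C x t z) y) *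
        deriv (deriv (fun t => cuboidGauge A B C x t z)) y /
        (1 + Real.exp (deriv (fun t => cuboidGauge A B C x t z) y)) ^ 2 +
      Real.exp (deriv (fun r => cuboidGauge A B C x y r) z) *
        deriv (deriv (fun r => cuboidGauge A B C x y r)) z /
        (1 + Real.exp (deriv (fun r => cuboidGauge A B C x y r) z)) ^ 2 = 0 := by
  rw [gauge_aux_s16 (cuboidGauge A B C 0 y z + A * Real.log A) (-1) A x (Or.inr rfl) _ ?_ hx,
    gauge_aux_s16 (cuboidGauge A B C x 0 z - B * Real.log B) 1 B y (Or.inl rfl) _ ?_ hy,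
    gauge_aux_s16 (cuboidGauge A B C x y 0 - C * Real.log C) 1 C z (Or.inl rfl) _ ?_ hz]
  · rw [neg_div, hABC]; ring
  all_goals
    intro s
    simp only [cuboidGauge, sub_zero, zero_mul]
    ring
end

section
/- The truncated-orthant honeycomb limit shape solves the lozenge PDE: the function h(x,y) = (2x−1)(2y+1)/(2(2x+1)) satisfies, at every point with 2x+1 ≠ 0, the equation (h_y − h_y²)·h_{xx} + 2·h_x·h_y·h_{xy} + (h_x − h_x²)·h_{yy} = 0, where h_x, h_y are the first partial derivatives and h_{xx}, h_{xy}, h_{yy} the second partial derivatives of h. -/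
/-- The truncated-orthant honeycomb limit shape height function
`h(x,y) = (2x−1)(2y+1)/(2(2x+1))`. -/
noncomputable def truncOrthantHeight (x y : ℝ) : ℝ :=
  (2 * x - 1) * (2 * y + 1) / (2 * (2 * x + 1))

lemma truncOrthant_dx (x y : ℝ) (hx : 2 * x + 1 ≠ 0) :
    deriv (fun s => truncOrthantHeight s y) x = 2 * (2 * y + 1) / (2 * x + 1) ^ 2 := by
  have h1 : HasDerivAt (fun s : ℝ => (2 * s - 1) * (2 * y + 1)) ((2 * 1) * (2 * y + 1)) x :=
    (((hasDerivAt_id x).const_mul 2).sub_const 1).mul_const _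
  have h2 : HasDerivAt (fun s : ℝ => 2 * (2 * s + 1)) (2 * (2 * 1)) x :=
    (((hasDerivAt_id x).const_mul 2).add_const 1).const_mul 2
  have h3 := (h1.fun_div h2 (mul_ne_zero two_ne_zero hx)).deriv
  unfold truncOrthantHeight
  rw [h3]
  field_simp
  ring

lemma truncOrthant_dy (x y : ℝ) :
    deriv (fun t => truncOrthantHeight x t) y = (2 * x - 1) * 2 / (2 * (2 * x + 1)) := by
  have h1 : HasDerivAt (fun t : ℝ => (2 * x - 1) * (2 * t + 1) / (2 * (2 * x + 1)))
      ((2 * x - 1) * (2 * 1) / (2 * (2 * x + 1))) y :=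
    ((((hasDerivAt_id y).const_mul 2).add_const 1).const_mul _).div_const _
  unfold truncOrthantHeight
  rw [h1.deriv, mul_one]

lemma truncOrthant_dxx (x y : ℝ) (hx : 2 * x + 1 ≠ 0) :
    deriv (deriv (fun s => truncOrthantHeight s y)) x
      = - 8 * (2 * y + 1) / (2 * x + 1) ^ 3 := by
  have he : deriv (fun s => truncOrthantHeight s y) =ᶠ[nhds x]
      fun s => 2 * (2 * y + 1) / (2 * s + 1) ^ 2 := by
    have hc : ContinuousAt (fun s : ℝ => 2 * s + 1) x := by fun_prop
    filter_upwards [hc.eventually_ne hx] with s hs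
    exact truncOrthant_dx s y hs
  rw [he.deriv_eq]
  have h2 : HasDerivAt (fun s : ℝ => (2 * s + 1) ^ 2) (2 * (2 * x + 1) ^ 1 * (2 * 1)) x := by
    simpa using (((hasDerivAt_id x).const_mul 2).add_const 1).fun_pow 2
  rw [((hasDerivAt_const x (2 * (2 * y + 1))).fun_div h2 (pow_ne_zero 2 hx)).deriv]
  field_simp
  ring

lemma truncOrthant_dxy (x y : ℝ) (hx : 2 * x + 1 ≠ 0) :
    deriv (fun t => deriv (fun s => truncOrthantHeight s t) x) y = 4 / (2 * x + 1) ^ 2 := by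
  have he : (fun t => deriv (fun s => truncOrthantHeight s t) x) =
      fun t => 2 * (2 * t + 1) / (2 * x + 1) ^ 2 := funext fun t => truncOrthant_dx x t hx
  have h1 : HasDerivAt (fun t : ℝ => 2 * (2 * t + 1) / (2 * x + 1) ^ 2)
      (2 * (2 * 1) / (2 * x + 1) ^ 2) y :=
    ((((hasDerivAt_id y).const_mul 2).add_const 1).const_mul _).div_const _
  rw [he, h1.deriv]
  norm_num

lemma truncOrthant_dyy (x y : ℝ) :
    deriv (deriv (fun t => truncOrthantHeight x t)) y = 0 := by
  have he : deriv (fun t => truncOrthantHeight x t) =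
      fun _ => (2 * x - 1) * 2 / (2 * (2 * x + 1)) := funext fun t => truncOrthant_dy x t
  rw [he, deriv_const]

/-- The truncated-orthant honeycomb limit shape solves the lozenge PDE: at every point
with `2x + 1 ≠ 0`,
`(h_y − h_y²)·h_{xx} + 2·h_x·h_y·h_{xy} + (h_x − h_x²)·h_{yy} = 0`,
where subscripts denote partial derivatives. -/
theorem truncOrthant_solves_lozenge_PDE
    (x y : ℝ) (hx : 2 * x + 1 ≠ 0) :
    (deriv (fun t => truncOrthantHeight x t) y -
          (deriv (fun t => truncOrthantHeight x t) y) ^ 2) *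
        deriv (deriv (fun s => truncOrthantHeight s y)) x +
      2 * deriv (fun s => truncOrthantHeight s y) x *
        deriv (fun t => truncOrthantHeight x t) y *
        deriv (fun t => deriv (fun s => truncOrthantHeight s t) x) y +
      (deriv (fun s => truncOrthantHeight s y) x -
          (deriv (fun s => truncOrthantHeight s y) x) ^ 2) *
        deriv (deriv (fun t => truncOrthantHeight x t)) y = 0 := by
  rw [truncOrthant_dyy, truncOrthant_dxy x y hx, truncOrthant_dxx x y hx,
    truncOrthant_dx x y hx, truncOrthant_dy]
  field_simp
  ring
end

section
/- Critical gauge of the truncated quadrant in the honeycomb lattice: for every integer K ≥ 1 the functions w and b satisfy the critical gauge equations at every vertex: for all integers i, j ≥ 0 with i + j ≥ K − 1, w(i,j) · ( [i+j ≥ K]·b(i,j) + b(i+1,j) + b(i,j+1) ) = 1, where the term b(i,j) is included only when i + j ≥ K; and for all integers i, j ≥ 0 with i + j ≥ K, b(i,j) · ( w(i,j) + [i ≥ 1]·w(i−1,j) + [j ≥ 1]·w(i,j−1) ) = 1, where the terms w(i−1,j), w(i,j−1) are included only when the corresponding coordinate is ≥ 1. -/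
/-- The critical gauge function on black vertices of the truncated quadrant in the
honeycomb lattice: `b(i,j) = K^{i+j} / (C(i+j,j) · (i+j+1) · (i+j−K)!)`. -/
noncomputable def tqB (K i j : ℕ) : ℝ :=
  (K : ℝ) ^ (i + j) /
    ((Nat.choose (i + j) j : ℝ) * ((i + j + 1 : ℕ) : ℝ) *
      (Nat.factorial (i + j - K) : ℝ))

/-- The critical gauge function on white vertices of the truncated quadrant in the
honeycomb lattice: `w(i,j) = C(i+j,j) · (i+j+1−K)! / K^{i+j}`. -/
noncomputable def tqW (K i j : ℕ) : ℝ :=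
  (Nat.choose (i + j) j : ℝ) * (Nat.factorial (i + j + 1 - K) : ℝ) / (K : ℝ) ^ (i + j)

theorem tq_choose (i j : ℕ) :
    ((i + j).choose j : ℝ) = (i + j).factorial / (i.factorial * j.factorial) := by
  rw [Nat.choose_symm_add.symm, Nat.cast_add_choose]

theorem tqB_eq (K i j m n : ℕ) (hn : i + j = n) (hm : n = K + m) :
    tqB K i j = (K : ℝ) ^ n * (i.factorial * j.factorial) /
      (n.factorial * ((n : ℝ) + 1) * m.factorial) := by
  subst hn
  have h : i + j - K = m := by omega
  have hc : ((i + j).choose j : ℝ) = (i + j).factorial / (i.factorial * j.factorial) := by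
    rw [tq_choose i j]
  unfold tqB
  rw [h, hc]
  push_cast
  have := Nat.cast_ne_zero (R := ℝ).2 (Nat.factorial_ne_zero i)
  have := Nat.cast_ne_zero (R := ℝ).2 (Nat.factorial_ne_zero j)
  have := Nat.cast_ne_zero (R := ℝ).2 (Nat.factorial_ne_zero (i + j))
  have := Nat.cast_ne_zero (R := ℝ).2 (Nat.factorial_ne_zero m)
  have : (i : ℝ) + j + 1 ≠ 0 := by positivity
  field_simp

theorem tqW_eq (K i j m n : ℕ) (hn : i + j = n) (hm : n + 1 = K + m) :
    tqW K i j = (n.factorial : ℝ) * m.factorial /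
      ((K : ℝ) ^ n * (i.factorial * j.factorial)) := by
  subst hn
  have h : i + j + 1 - K = m := by omega
  unfold tqW
  rw [h, tq_choose i j, div_mul_eq_mul_div, div_div]
  congr 1
  ring

/-- Critical gauge of the truncated quadrant in the honeycomb lattice: for every
`K ≥ 1`, the functions `w` and `b` satisfy the critical gauge equations at every white
vertex (`i + j ≥ K − 1`) and every black vertex (`i + j ≥ K`), where a neighbor's term
is included exactly when the neighbor lies in the region. -/
theorem truncated_quadrant_critical_gauge (K : ℕ) (hK : 1 ≤ K) :
    (∀ i j : ℕ, K - 1 ≤ i + j →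
      tqW K i j *
          ((if K ≤ i + j then tqB K i j else 0) + tqB K (i + 1) j + tqB K i (j + 1)) = 1) ∧
    (∀ i j : ℕ, K ≤ i + j →
      tqB K i j *
          (tqW K i j + (if 1 ≤ i then tqW K (i - 1) j else 0) +
            (if 1 ≤ j then tqW K i (j - 1) else 0)) = 1) := by
  have hK0 : (K : ℝ) ≠ 0 := by positivity
  have hf : ∀ n : ℕ, (n.factorial : ℝ) ≠ 0 := fun n => by positivity
  have hs : ∀ n : ℕ, (n : ℝ) + 1 ≠ 0 := fun n => by positivity
  constructor
  · intro i j h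
    obtain ⟨n, hn⟩ : ∃ n, i + j = n := ⟨_, rfl⟩
    obtain ⟨m, hm⟩ : ∃ m, n + 1 = K + m := ⟨n + 1 - K, by omega⟩
    have hR : (n : ℝ) + 1 = K + m := by exact_mod_cast hm
    have hij : (i : ℝ) + j = n := by exact_mod_cast hn
    have hn2 : (n : ℝ) + 1 + 1 ≠ 0 := by positivity
    have e1 : tqW K i j * (tqB K (i + 1) j + tqB K i (j + 1)) = K / (n + 1) := by
      rw [tqW_eq K i j m n hn hm, tqB_eq K (i + 1) j m (n + 1) (by omega) hm,
        tqB_eq K i (j + 1) m (n + 1) (by omega) hm]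
      simp only [Nat.factorial_succ]
      push_cast
      have := hf n; have := hf m; have := hf i; have := hf j; have := hs n
      rw [← hij] at *
      field_simp
      ring
    have e2 : tqW K i j * (if K ≤ i + j then tqB K i j else 0) = m / (n + 1) := by
      split_ifs with hc
      · obtain ⟨l, rfl⟩ : ∃ l, m = l + 1 := ⟨m - 1, by omega⟩
        rw [tqW_eq K i j _ n hn hm, tqB_eq K i j l n hn (by omega)]
        simp only [Nat.factorial_succ]
        push_cast
        have := hf n; have := hf l; have := hf i; have := hf j; have := hs n
        field_simp
      · have : m = 0 := by omega
        simp [this]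
    rw [add_assoc, mul_add, e1, e2, ← add_div, div_eq_one_iff_eq (hs n)]
    linarith
  · intro i j h
    obtain ⟨n, hn⟩ : ∃ n, i + j = n + 1 := ⟨i + j - 1, by omega⟩
    obtain ⟨m, hm⟩ : ∃ m, n + 1 = K + m := ⟨n + 1 - K, by omega⟩
    have hR : (n : ℝ) + 1 = K + m := by exact_mod_cast hm
    have hij : (i : ℝ) + j = n + 1 := by exact_mod_cast hn
    have hn2 : (n : ℝ) + 1 + 1 ≠ 0 := by positivity
    have a1 : (if 1 ≤ i then tqW K (i - 1) j else 0) = i * ((n.factorial : ℝ) * m.factorial /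
        ((K : ℝ) ^ n * (i.factorial * j.factorial))) := by
      rcases i with _ | i
      · simp
      · rw [if_pos (by omega), tqW_eq K _ j m n (by omega) hm]
        simp only [Nat.factorial_succ, Nat.add_sub_cancel]
        push_cast
        have := hf i; have := hf j; have := hs i
        field_simp
    have a2 : (if 1 ≤ j then tqW K i (j - 1) else 0) = j * ((n.factorial : ℝ) * m.factorial /
        ((K : ℝ) ^ n * (i.factorial * j.factorial))) := by
      rcases j with _ | j
      · simp
      · rw [if_pos (by omega), tqW_eq K i _ m n (by omega) hm]
        simp only [Nat.factorial_succ, Nat.add_sub_cancel]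
        push_cast
        have := hf i; have := hf j; have := hs j
        field_simp
    rw [a1, a2, add_assoc, ← add_mul, hij, tqB_eq K i j m (n + 1) hn hm,
      tqW_eq K i j (m + 1) (n + 1) hn (by omega)]
    simp only [Nat.factorial_succ]
    push_cast
    have := hf n; have := hf m; have := hf i; have := hf j; have := hs n
    field_simp
    rw [pow_succ]
    linear_combination (-(K:ℝ) ^ n) * hR
end

section
/- Critical gauge recursion for the truncated orthant in the diamond cubic lattice: for every integer K ≥ 1, the real sequences u_ℓ := (ℓ−K+1)!·(ℓ+K+2)! / ( K^ℓ·(K+1)^ℓ·(2K+1)! ) (defined for ℓ ≥ K−1) and v_ℓ := (2K+1)!·K^ℓ·(K+1)^ℓ / ( (ℓ+1)·(ℓ+2)·(ℓ+K+1)!·(ℓ−K)! ) (defined for ℓ ≥ K) satisfy, for every integer ℓ ≥ K, both (u_{ℓ−1} + u_ℓ)·v_ℓ = 1 and u_ℓ·( v_ℓ + ((ℓ+3)/(ℓ+1))·v_{ℓ+1} ) = 1. -/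
/-- The sequence `u_ℓ = (ℓ−K+1)!·(ℓ+K+2)! / (K^ℓ·(K+1)^ℓ·(2K+1)!)` (for `ℓ ≥ K−1`),
written with truncated natural subtraction as `(ℓ+1−K)!`. -/
noncomputable def diamondU (K ℓ : ℕ) : ℝ :=
  (Nat.factorial (ℓ + 1 - K) : ℝ) * (Nat.factorial (ℓ + K + 2) : ℝ) /
    ((K : ℝ) ^ ℓ * ((K : ℝ) + 1) ^ ℓ * (Nat.factorial (2 * K + 1) : ℝ))

/-- The sequence `v_ℓ = (2K+1)!·K^ℓ·(K+1)^ℓ / ((ℓ+1)·(ℓ+2)·(ℓ+K+1)!·(ℓ−K)!)`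
(for `ℓ ≥ K`). -/
noncomputable def diamondV (K ℓ : ℕ) : ℝ :=
  (Nat.factorial (2 * K + 1) : ℝ) * (K : ℝ) ^ ℓ * ((K : ℝ) + 1) ^ ℓ /
    (((ℓ : ℝ) + 1) * ((ℓ : ℝ) + 2) * (Nat.factorial (ℓ + K + 1) : ℝ) *
      (Nat.factorial (ℓ - K) : ℝ))

/-- Critical gauge recursion for the truncated orthant in the diamond cubic lattice:
for every `K ≥ 1` and every `ℓ ≥ K`, both `(u_{ℓ−1} + u_ℓ)·v_ℓ = 1` and
`u_ℓ·(v_ℓ + ((ℓ+3)/(ℓ+1))·v_{ℓ+1}) = 1`. -/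
theorem diamond_cubic_gauge_recursion (K : ℕ) (hK : 1 ≤ K) :
    ∀ ℓ : ℕ, K ≤ ℓ →
      (diamondU K (ℓ - 1) + diamondU K ℓ) * diamondV K ℓ = 1 ∧
      diamondU K ℓ *
          (diamondV K ℓ + (((ℓ : ℝ) + 3) / ((ℓ : ℝ) + 1)) * diamondV K (ℓ + 1)) = 1 := by
  intro l hl
  obtain ⟨n, rfl⟩ : ∃ n, l = K + n := ⟨l - K, by omega⟩
  have hK0 : (K : ℝ) ≠ 0 := by
    have : K ≠ 0 := by omega
    exact_mod_cast this
  have hK1 : (K : ℝ) + 1 ≠ 0 := by positivity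
  have e1 : K + n + 1 - K = n + 1 := by omega
  have e2 : K + n - K = n := by omega
  have e3 : K + n - 1 + 1 - K = n := by omega
  have e4 : K + n - 1 + K + 2 = K + n + K + 1 := by omega
  have e5 : K + n + 1 + K + 1 = (K + n + K + 1) + 1 := by omega
  have e6 : K + n + K + 2 = (K + n + K + 1) + 1 := by omega
  have p1 : ∀ x : ℝ, x ^ (K + n) = x ^ (K + n - 1) * x := by
    intro x
    rw [← pow_succ]
    congr 1
    omega
  have hf : ((K + n + K + 1).factorial : ℝ) ≠ 0 := by positivity
  have hn : (n.factorial : ℝ) ≠ 0 := by positivity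
  have hg : ((2 * K + 1).factorial : ℝ) ≠ 0 := by positivity
  have h1 : (K : ℝ) + n + 1 ≠ 0 := by positivity
  have h2 : (K : ℝ) + n + 2 ≠ 0 := by positivity
  have h3 : (K : ℝ) + n + 3 ≠ 0 := by positivity
  have h3' : (K : ℝ) + n + 1 + 2 ≠ 0 := by positivity
  have h2' : (K : ℝ) + n + 1 + 1 ≠ 0 := by positivity
  have hm : (n : ℝ) + 1 ≠ 0 := by positivity
  have hq : (K : ℝ) + n + K + 1 + 1 ≠ 0 := by positivity
  have uv : diamondU K (K + n) * diamondV K (K + n)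
      = (n + 1) * (K + n + K + 2) / ((K + n + 1) * (K + n + 2)) := by
    unfold diamondU diamondV
    rw [e1, e2, e6, Nat.factorial_succ n, Nat.factorial_succ (K + n + K + 1)]
    push_cast
    generalize ((K + n + K + 1).factorial : ℝ) = F at *
    field_simp
    ring
  have uv1 : diamondU K (K + n - 1) * diamondV K (K + n)
      = K * (K + 1) / ((K + n + 1) * (K + n + 2)) := by
    unfold diamondU diamondV
    rw [e2, e3, e4, p1, p1]
    push_cast
    generalize ((K + n + K + 1).factorial : ℝ) = F at *
    field_simp
  have uv2 : diamondU K (K + n) * diamondV K (K + n + 1)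
      = K * (K + 1) / ((K + n + 2) * (K + n + 3)) := by
    unfold diamondU diamondV
    rw [e1, e5, e6, Nat.factorial_succ n, Nat.factorial_succ (K + n + K + 1),
      pow_succ, pow_succ]
    push_cast
    generalize ((K + n + K + 1).factorial : ℝ) = F at *
    field_simp
    ring
  constructor
  · rw [add_mul, uv, uv1]
    field_simp
    ring
  · rw [mul_add, mul_left_comm, uv, uv2]
    push_cast
    field_simp
    ring
end
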